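/- arXiv:2302.06960 — 7 statements merged into one kernel-verified Lean document; each statement's English description precedes it below -/
import Mathlib

section
/- Let D be a compact subset of a Euclidean space, W a compact subset of R^d, f : D × W → R continuous, and ν a Borel probability measure on D. Let (S_n)_{n≥1} be a sequence of nonempty finite (possibly random) subsets of D such that for every w ∈ W, (1/|S_n|) Σ_{z ∈ S_n} f(z, w) → ∫_D f(z, w) dν(z) almost surely. For each n, let w_n ∈ argmin_{w ∈ W} (1/|S_n|) Σ_{z ∈ S_n} f(z, w). Then d(w_n, W*(ν)) → 0 almost surely, where W*(ν) = argmin_{w ∈ W} ∫_D f(z, w) dν(z). -/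
/-!
Since `f` is uniformly continuous on the compact set `D ×ˢ W`, the functions `w ↦ f (z, w)`, `z ∈ D`,
share a modulus of continuity on `W`, and so do all their averages: the empirical losses and the
limiting loss `w ↦ ∫ f (z, w) dν` (`average_sub_le`, `integral_sub_le`).  Almost surely the empirical
losses converge at every point of a countable dense subset of `W`, so by equicontinuity and
compactness they converge uniformly on `W` (`eventually_uniform_of_dense`).  Outside any
neighbourhood of the argmin, the continuous limit stays above its minimum by a fixed gap, so
minimizers of uniformly close functions cannot stay there (`tendsto_infDist_argmin`).
-/

open MeasureTheory Filter Topology Metric Set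

/-- Equicontinuous functions on a compact set that converge at the points of a dense subset converge
uniformly. -/
theorem eventually_uniform_of_dense {X : Type*} [PseudoMetricSpace X] {W T : Set X}
    (hW : IsCompact W) (hTW : T ⊆ W) (hWT : W ⊆ closure T) {L : ℕ → X → ℝ} {F : X → ℝ}
    (hL : ∀ ε > 0, ∃ δ > 0, ∀ x ∈ W, ∀ y ∈ W, dist x y < δ → ∀ n, |L n x - L n y| ≤ ε)
    (hF : ∀ ε > 0, ∃ δ > 0, ∀ x ∈ W, ∀ y ∈ W, dist x y < δ → |F x - F y| ≤ ε)
    (hconv : ∀ t ∈ T, Tendsto (fun n => L n t) atTop (𝓝 (F t))) {ε : ℝ} (hε : 0 < ε) :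
    ∀ᶠ n in atTop, ∀ x ∈ W, |L n x - F x| ≤ ε := by
  obtain ⟨δ₁, hδ₁, h₁⟩ := hL (ε / 3) (by positivity)
  obtain ⟨δ₂, hδ₂, h₂⟩ := hF (ε / 3) (by positivity)
  have hcov : W ⊆ ⋃ t ∈ T, ball t (min δ₁ δ₂) := by
    intro x hx
    obtain ⟨t, ht, hxt⟩ := Metric.mem_closure_iff.1 (hWT hx) (min δ₁ δ₂) (lt_min hδ₁ hδ₂)
    exact mem_iUnion₂.2 ⟨t, ht, hxt⟩
  obtain ⟨b, hbT, hbfin, hb⟩ := hW.elim_finite_subcover_image (fun t _ => isOpen_ball) hcov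
  have hev : ∀ᶠ n in atTop, ∀ t ∈ b, |L n t - F t| < ε / 3 := by
    rw [hbfin.eventually_all]
    intro t ht
    have := Metric.tendsto_nhds.1 (hconv t (hbT ht)) (ε / 3) (by positivity)
    simpa only [Real.dist_eq] using this
  filter_upwards [hev] with n hn x hx
  obtain ⟨t, ht, hxt⟩ := mem_iUnion₂.1 (hb hx)
  have hxt' : dist x t < min δ₁ δ₂ := hxt
  have a := abs_le.1 (h₁ x hx t (hTW (hbT ht)) (hxt'.trans_le (min_le_left _ _)) n)
  have c := abs_le.1 (h₂ x hx t (hTW (hbT ht)) (hxt'.trans_le (min_le_right _ _)))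
  have d := abs_lt.1 (hn t ht)
  exact abs_le.2 ⟨by linarith, by linarith⟩

/-- Minimizers of functions converging uniformly on a compact set to a continuous limit approach the
set of minimizers of the limit. -/
theorem tendsto_infDist_argmin {X : Type*} [PseudoMetricSpace X] {W : Set X}
    (hW : IsCompact W) (hWne : W.Nonempty) {L : ℕ → X → ℝ} {F : X → ℝ} (hF : ContinuousOn F W)
    (hunif : ∀ ε > 0, ∀ᶠ n in atTop, ∀ x ∈ W, |L n x - F x| ≤ ε)
    {u : ℕ → X} (huW : ∀ n, u n ∈ W) (humin : ∀ n, ∀ x ∈ W, L n (u n) ≤ L n x) :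
    Tendsto (fun n => infDist (u n) {w | w ∈ W ∧ ∀ w' ∈ W, F w ≤ F w'}) atTop (𝓝 0) := by
  set A := {w | w ∈ W ∧ ∀ w' ∈ W, F w ≤ F w'} with hA
  refine Metric.tendsto_nhds.2 fun ε hε => ?_
  obtain ⟨m, hmW, hm⟩ := hW.exists_isMinOn hWne hF
  set K := W ∩ {w | ε ≤ infDist w A} with hK
  have hKc : IsCompact K :=
    hW.inter_right (isClosed_le continuous_const (continuous_infDist_pt A))
  -- It suffices that the minimizers eventually avoid `K`, the points of `W` far from the argmin.
  suffices h : ∀ᶠ n in atTop, u n ∉ K by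
    filter_upwards [h] with n hn
    rw [Real.dist_eq, sub_zero, abs_of_nonneg infDist_nonneg]
    by_contra hlt
    exact hn ⟨huW n, not_lt.1 hlt⟩
  rcases K.eq_empty_or_nonempty with hKe | hKne
  · simp [hKe]
  obtain ⟨k, hkK, hk⟩ := hKc.exists_isMinOn hKne (hF.mono inter_subset_left)
  have hgap : F m < F k := by
    by_contra hle
    have hkA : k ∈ A := ⟨hkK.1, fun w' hw' => (not_lt.1 hle).trans (hm hw')⟩
    have h0 : ε ≤ infDist k A := hkK.2
    rw [infDist_zero_of_mem hkA] at h0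
    linarith
  filter_upwards [hunif ((F k - F m) / 3) (by linarith)] with n hn hmem
  have a := abs_le.1 (hn _ (huW n))
  have c := abs_le.1 (hn m hmW)
  have d := humin n m hmW
  have e : F k ≤ F (u n) := hk hmem
  linarith

theorem average_sub_le {Z : Type*} {s : Finset Z} (hs : s.Nonempty) {g h : Z → ℝ} {ε : ℝ}
    (hgh : ∀ z ∈ s, |g z - h z| ≤ ε) :
    |(s.card : ℝ)⁻¹ * ∑ z ∈ s, g z - (s.card : ℝ)⁻¹ * ∑ z ∈ s, h z| ≤ ε := by
  have hc : (0 : ℝ) < s.card := by exact_mod_cast hs.card_pos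
  rw [← mul_sub, ← Finset.sum_sub_distrib, abs_mul, abs_of_pos (inv_pos.2 hc),
    inv_mul_le_iff₀ hc]
  calc |∑ z ∈ s, (g z - h z)| ≤ ∑ z ∈ s, |g z - h z| := Finset.abs_sum_le_sum_abs _ _
    _ ≤ s.card • ε := Finset.sum_le_card_nsmul _ _ _ hgh
    _ = s.card * ε := nsmul_eq_mul _ _

theorem integral_sub_le {Z : Type*} [MeasurableSpace Z] {ν : Measure Z} [IsProbabilityMeasure ν]
    {g h : Z → ℝ} (hg : Integrable g ν) (hh : Integrable h ν) {ε : ℝ}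
    (hgh : ∀ᵐ z ∂ν, |g z - h z| ≤ ε) :
    |(∫ z, g z ∂ν) - ∫ z, h z ∂ν| ≤ ε := by
  rw [← integral_sub hg hh]
  simpa using norm_integral_le_of_norm_le_const (μ := ν) (f := fun z => g z - h z) hgh

/-- (Proposition 2 of the paper.)  Let `D` be a compact subset of a
Euclidean space, `W ⊂ ℝ^d` compact, `f : D × W → ℝ` continuous and `ν` a Borel
probability measure on `D`.  Let `(S_n)` be nonempty finite random subsets of `D` such
that for every `w ∈ W` the empirical loss `(1/|S_n|) Σ_{z ∈ S_n} f (z, w)` converges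
almost surely to `∫ f (z, w) dν`.  If `w_n` minimizes the empirical loss over `W`, then
`dist (w_n, W*(ν)) → 0` almost surely, where `W*(ν) = argmin_{w ∈ W} ∫ f (z, w) dν`. -/
theorem stmt_1 {dz dw : ℕ}
    (D : Set (EuclideanSpace ℝ (Fin dz))) (hD : IsCompact D)
    (W : Set (EuclideanSpace ℝ (Fin dw))) (hW : IsCompact W) (hWne : W.Nonempty)
    (f : EuclideanSpace ℝ (Fin dz) × EuclideanSpace ℝ (Fin dw) → ℝ)
    (hf : ContinuousOn f (D ×ˢ W))
    (ν : Measure (EuclideanSpace ℝ (Fin dz))) [IsProbabilityMeasure ν] (hν : ν Dᶜ = 0)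
    (Ω : Type) [MeasurableSpace Ω] (P : Measure Ω) [IsProbabilityMeasure P]
    (S : ℕ → Ω → Finset (EuclideanSpace ℝ (Fin dz)))
    (hSne : ∀ n ω, (S n ω).Nonempty) (hSD : ∀ n ω, ↑(S n ω) ⊆ D)
    (hconv : ∀ w ∈ W, ∀ᵐ ω ∂P,
      Tendsto (fun n => ((S n ω).card : ℝ)⁻¹ * ∑ z ∈ S n ω, f (z, w))
        atTop (𝓝 (∫ z, f (z, w) ∂ν)))
    (wn : ℕ → Ω → EuclideanSpace ℝ (Fin dw))
    (hwnW : ∀ n ω, wn n ω ∈ W)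
    (hwnmin : ∀ n ω, ∀ w' ∈ W,
      ((S n ω).card : ℝ)⁻¹ * ∑ z ∈ S n ω, f (z, wn n ω) ≤
      ((S n ω).card : ℝ)⁻¹ * ∑ z ∈ S n ω, f (z, w'))
    (Wstar : Set (EuclideanSpace ℝ (Fin dw)))
    (hWstar : Wstar = {w | w ∈ W ∧ ∀ w' ∈ W, (∫ z, f (z, w) ∂ν) ≤ ∫ z, f (z, w') ∂ν}) :
    ∀ᵐ ω ∂P, Tendsto (fun n => infDist (wn n ω) Wstar) atTop (𝓝 0) := by
  have hDae : ∀ᵐ z ∂ν, z ∈ D := hν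
  have hint : ∀ w ∈ W, Integrable (fun z => f (z, w)) ν := by
    intro w hw
    have hc : ContinuousOn (fun z => f (z, w)) D :=
      hf.comp (by fun_prop) fun z hz => ⟨hz, hw⟩
    rw [← Measure.restrict_eq_self_of_ae_mem hDae]
    exact hc.integrableOn_compact hD
  -- A modulus of continuity in `w`, uniform over `z ∈ D`.
  have hmod : ∀ ε > 0, ∃ δ > 0, ∀ x ∈ W, ∀ y ∈ W, dist x y < δ →
      ∀ z ∈ D, |f (z, x) - f (z, y)| ≤ ε := by
    intro ε hε
    obtain ⟨δ, hδ, h⟩ := Metric.uniformContinuousOn_iff.1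
      ((hD.prod hW).uniformContinuousOn_of_continuous hf) ε hε
    refine ⟨δ, hδ, fun x hx y hy hxy z hz => ?_⟩
    have := h (z, x) ⟨hz, hx⟩ (z, y) ⟨hz, hy⟩ (by simpa [Prod.dist_eq, hδ] using hxy)
    rw [Real.dist_eq] at this
    exact this.le
  have hFmod : ∀ ε > 0, ∃ δ > 0, ∀ x ∈ W, ∀ y ∈ W, dist x y < δ →
      |(∫ z, f (z, x) ∂ν) - ∫ z, f (z, y) ∂ν| ≤ ε := by
    intro ε hε
    obtain ⟨δ, hδ, h⟩ := hmod ε hε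
    exact ⟨δ, hδ, fun x hx y hy hxy => integral_sub_le (hint x hx) (hint y hy)
      (hDae.mono fun z hz => h x hx y hy hxy z hz)⟩
  have hFc : ContinuousOn (fun w => ∫ z, f (z, w) ∂ν) W := by
    refine Metric.continuousOn_iff.2 fun y hy ε hε => ?_
    obtain ⟨δ, hδ, h⟩ := hFmod (ε / 2) (by positivity)
    refine ⟨δ, hδ, fun x hx hxy => ?_⟩
    rw [Real.dist_eq]
    linarith [h x hx y hy hxy]
  obtain ⟨T, hTW, hTc, hWT⟩ :=
    (TopologicalSpace.IsSeparable.of_separableSpace W).exists_countable_dense_subset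
  have hae : ∀ᵐ ω ∂P, ∀ t ∈ T,
      Tendsto (fun n => ((S n ω).card : ℝ)⁻¹ * ∑ z ∈ S n ω, f (z, t))
        atTop (𝓝 (∫ z, f (z, t) ∂ν)) :=
    (ae_ball_iff hTc).2 fun t ht => hconv t (hTW ht)
  filter_upwards [hae] with ω hω
  rw [hWstar]
  refine tendsto_infDist_argmin
    (L := fun n w => ((S n ω).card : ℝ)⁻¹ * ∑ z ∈ S n ω, f (z, w)) hW hWne hFc
    (fun ε hε => eventually_uniform_of_dense hW hTW hWT ?_ hFmod hω hε)
    (fun n => hwnW n ω) (fun n => hwnmin n ω)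
  intro ε hε
  obtain ⟨δ, hδ, h⟩ := hmod ε hε
  exact ⟨δ, hδ, fun x hx y hy hxy n => average_sub_le (hSne n ω)
    fun z hz => h x hx y hy hxy z (hSD n ω hz)⟩
end

section
/- Let D be a compact subset of a Euclidean space, W a compact subset of R^d, f : D × W → R continuous, and ν, μ Borel probability measures on D. Let (S_n)_{n≥1} be nonempty finite (possibly random) subsets of D such that for every w ∈ W, (1/|S_n|) Σ_{z ∈ S_n} f(z, w) → ∫_D f(z, w) dν(z) almost surely, and let w_n ∈ argmin_{w ∈ W} (1/|S_n|) Σ_{z ∈ S_n} f(z, w). If additionally L_μ(w_n) → min_{w ∈ W} L_μ(w) almost surely, where L_μ(w) = ∫_D f(z, w) dμ(z), then min_{w ∈ W*(ν)} L_μ(w) = min_{w ∈ W} L_μ(w), where W*(ν) = argmin_{w ∈ W} ∫_D f(z, w) dν(z); equivalently, W*(ν) ∩ argmin_{w ∈ W} L_μ(w) ≠ ∅. -/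
/-!
The empirical risks and the two population risks `w ↦ ∫ f (z, w) dν`, `w ↦ ∫ f (z, w) dμ` are
averages of `f` over probability measures carried by the compact set `D`, so they all share one
modulus of continuity in `w` (`exists_modulus`, `avg_le_add`, `integral_le_add`). Pointwise
convergence is imposed almost surely on a countable dense subset of `W` simultaneously, after
which a single outcome `ω` is enough. By compactness the minimizers `w_n(ω)` have a cluster point
`w₀ ∈ W`. The shared modulus turns minimality of `w_n` for the empirical risk into minimality of
`w₀` for the `ν`-risk (`limit_minimizes`), and continuity of the `μ`-risk together with the
convergence of `∫ f (z, w_n) dμ` shows that `w₀` also minimizes the `μ`-risk.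
-/


open MeasureTheory Filter Topology Metric Set

section Helpers

variable {X Y : Type*} [MetricSpace X] [MetricSpace Y]

/-- A modulus of continuity in the parameter which is uniform over the data; it is one-sided, as
the roles of `w` and `w'` can be exchanged. -/
lemma exists_modulus {D : Set X} (hD : IsCompact D) {W : Set Y} (hW : IsCompact W)
    {f : X × Y → ℝ} (hf : ContinuousOn f (D ×ˢ W)) {ε : ℝ} (hε : 0 < ε) :
    ∃ δ > 0, ∀ w ∈ W, ∀ w' ∈ W, dist w w' < δ → ∀ z ∈ D, f (z, w) ≤ f (z, w') + ε := by
  have hu := (hD.prod hW).uniformContinuousOn_of_continuous hf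
  obtain ⟨δ, hδ, h⟩ := Metric.uniformContinuousOn_iff.1 hu ε hε
  refine ⟨δ, hδ, fun w hw w' hw' hd z hz => ?_⟩
  have h1 := h (z, w) ⟨hz, hw⟩ (z, w') ⟨hz, hw'⟩ (by simpa [Prod.dist_eq, hδ] using hd)
  rw [Real.dist_eq] at h1
  linarith [(abs_lt.1 h1).2]

lemma avg_le_add {Z : Type*} {S : Finset Z} (hS : S.Nonempty) {g h : Z → ℝ} {ε : ℝ}
    (hgh : ∀ z ∈ S, g z ≤ h z + ε) :
    (S.card : ℝ)⁻¹ * ∑ z ∈ S, g z ≤ (S.card : ℝ)⁻¹ * ∑ z ∈ S, h z + ε := by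
  have hc : (0 : ℝ) < S.card := by exact_mod_cast hS.card_pos
  have hsum : ∑ z ∈ S, g z ≤ ∑ z ∈ S, h z + S.card * ε := by
    simpa [Finset.sum_add_distrib] using Finset.sum_le_sum hgh
  calc (S.card : ℝ)⁻¹ * ∑ z ∈ S, g z
      ≤ (S.card : ℝ)⁻¹ * (∑ z ∈ S, h z + S.card * ε) := by gcongr
    _ = _ := by field_simp

lemma continuousOn_slice {D : Set X} {W : Set Y} {f : X × Y → ℝ}
    (hf : ContinuousOn f (D ×ˢ W)) {w : Y} (hw : w ∈ W) :
    ContinuousOn (fun z => f (z, w)) D :=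
  hf.comp (by fun_prop) fun _ hz => ⟨hz, hw⟩

variable [MeasurableSpace X] [BorelSpace X]

lemma integrable_of_continuousOn {D : Set X} (hD : IsCompact D) {m : Measure X}
    [IsProbabilityMeasure m] (hm : m Dᶜ = 0) {g : X → ℝ} (hg : ContinuousOn g D) :
    Integrable g m := by
  have hr : m.restrict D = m := Measure.restrict_eq_self_of_ae_mem (mem_ae_iff.2 hm)
  have h := hg.integrableOn_compact (μ := m) hD
  rwa [IntegrableOn, hr] at h

lemma integral_le_add {D : Set X} (hD : IsCompact D) {m : Measure X}
    [IsProbabilityMeasure m] (hm : m Dᶜ = 0) {g h : X → ℝ} (hg : ContinuousOn g D)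
    (hh : ContinuousOn h D) {ε : ℝ} (hgh : ∀ z ∈ D, g z ≤ h z + ε) :
    ∫ z, g z ∂m ≤ ∫ z, h z ∂m + ε := by
  have hi := integrable_of_continuousOn hD hm hh
  have hD' : ∀ᵐ z ∂m, z ∈ D := mem_ae_iff.2 hm
  calc ∫ z, g z ∂m ≤ ∫ z, (h z + ε) ∂m :=
        integral_mono_ae (integrable_of_continuousOn hD hm hg) (hi.add (integrable_const ε))
          (hD'.mono hgh)
    _ = _ := by rw [integral_add hi (integrable_const ε)]; simp

lemma continuousOn_risk {D : Set X} (hD : IsCompact D) {W : Set Y} (hW : IsCompact W)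
    {f : X × Y → ℝ} (hf : ContinuousOn f (D ×ˢ W)) {m : Measure X}
    [IsProbabilityMeasure m] (hm : m Dᶜ = 0) :
    ContinuousOn (fun w => ∫ z, f (z, w) ∂m) W := by
  rw [Metric.continuousOn_iff]
  intro w hw ε hε
  obtain ⟨δ, hδ, h⟩ := exists_modulus hD hW hf (half_pos hε)
  refine ⟨δ, hδ, fun w' hw' hd => ?_⟩
  have h1 := integral_le_add hD hm (continuousOn_slice hf hw') (continuousOn_slice hf hw)
    (h w' hw' w hw hd)
  have h2 := integral_le_add hD hm (continuousOn_slice hf hw) (continuousOn_slice hf hw')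
    (h w hw w' hw' (by rwa [dist_comm]))
  rw [Real.dist_eq, abs_lt]
  constructor <;> linarith

/-- A limit point of empirical minimizers minimizes the limiting risk. Convergence of the empirical
risks is needed only on a dense subset `T` of `W`. -/
lemma limit_minimizes {D : Set X} (hD : IsCompact D) {W : Set Y} (hW : IsCompact W)
    {f : X × Y → ℝ} (hf : ContinuousOn f (D ×ˢ W)) {ν : Measure X}
    [IsProbabilityMeasure ν] (hν : ν Dᶜ = 0)
    {S : ℕ → Finset X} (hSne : ∀ n, (S n).Nonempty) (hSD : ∀ n, ↑(S n) ⊆ D)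
    {T : Set Y} (hTW : T ⊆ W) (hT : W ⊆ closure T)
    (hconv : ∀ w ∈ T, Tendsto (fun n => ((S n).card : ℝ)⁻¹ * ∑ z ∈ S n, f (z, w))
      atTop (𝓝 (∫ z, f (z, w) ∂ν)))
    {v : ℕ → Y} (hvW : ∀ n, v n ∈ W)
    (hvmin : ∀ n, ∀ w' ∈ W, ((S n).card : ℝ)⁻¹ * ∑ z ∈ S n, f (z, v n) ≤
      ((S n).card : ℝ)⁻¹ * ∑ z ∈ S n, f (z, w'))
    {w₀ : Y} (hw₀ : w₀ ∈ W) (hlim : Tendsto v atTop (𝓝 w₀)) :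
    ∀ w' ∈ W, ∫ z, f (z, w₀) ∂ν ≤ ∫ z, f (z, w') ∂ν := by
  intro w' hw'
  refine le_of_forall_pos_le_add fun ε hε => ?_
  obtain ⟨δ, hδ, hmod⟩ := exists_modulus hD hW hf (show 0 < ε / 3 by positivity)
  -- `p` and `q` approximate `w₀` and `w'` by points where the empirical risks converge.
  obtain ⟨p, hpT, hp⟩ := Metric.mem_closure_iff.1 (hT hw₀) (δ / 2) (by positivity)
  obtain ⟨q, hqT, hq⟩ := Metric.mem_closure_iff.1 (hT hw') δ hδ
  have hpW := hTW hpT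
  have hqW := hTW hqT
  have hpq : ∫ z, f (z, p) ∂ν ≤ ∫ z, f (z, q) ∂ν + ε / 3 := by
    refine le_of_tendsto_of_tendsto (hconv p hpT) ((hconv q hqT).add_const (ε / 3)) ?_
    filter_upwards [Metric.tendsto_nhds.1 hlim (δ / 2) (by positivity)] with n hn
    have hd : dist p (v n) < δ := by
      linarith [dist_triangle p w₀ (v n), dist_comm p w₀, dist_comm w₀ (v n)]
    have h1 := avg_le_add (hSne n) fun z hz => hmod p hpW (v n) (hvW n) hd z (hSD n hz)
    linarith [hvmin n q hqW]
  have h1 := integral_le_add hD hν (continuousOn_slice hf hw₀) (continuousOn_slice hf hpW)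
    (hmod w₀ hw₀ p hpW (by linarith))
  have h2 := integral_le_add hD hν (continuousOn_slice hf hqW) (continuousOn_slice hf hw')
    (hmod q hqW w' hw' (by rwa [dist_comm]))
  linarith

end Helpers

/-- (Corollary 2 of the paper: necessary condition for validity.)
In the setting of Statement 1, with an additional data-generating measure `μ` on `D`,
if moreover the generalization error `L_μ (w_n) = ∫ f (z, w_n) dμ` of the empirical
minimizers converges almost surely to `min_{w ∈ W} L_μ w`, then
`min_{w ∈ W*(ν)} L_μ w = min_{w ∈ W} L_μ w`; equivalently, `W*(ν)` meets
`argmin_{w ∈ W} L_μ w`. -/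
theorem stmt_2 {dz dw : ℕ}
    (D : Set (EuclideanSpace ℝ (Fin dz))) (hD : IsCompact D)
    (W : Set (EuclideanSpace ℝ (Fin dw))) (hW : IsCompact W) (hWne : W.Nonempty)
    (f : EuclideanSpace ℝ (Fin dz) × EuclideanSpace ℝ (Fin dw) → ℝ)
    (hf : ContinuousOn f (D ×ˢ W))
    (ν μ : Measure (EuclideanSpace ℝ (Fin dz)))
    [IsProbabilityMeasure ν] [IsProbabilityMeasure μ]
    (hν : ν Dᶜ = 0) (hμ : μ Dᶜ = 0)
    (Ω : Type) [MeasurableSpace Ω] (P : Measure Ω) [IsProbabilityMeasure P]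
    (S : ℕ → Ω → Finset (EuclideanSpace ℝ (Fin dz)))
    (hSne : ∀ n ω, (S n ω).Nonempty) (hSD : ∀ n ω, ↑(S n ω) ⊆ D)
    (hconv : ∀ w ∈ W, ∀ᵐ ω ∂P,
      Tendsto (fun n => ((S n ω).card : ℝ)⁻¹ * ∑ z ∈ S n ω, f (z, w))
        atTop (𝓝 (∫ z, f (z, w) ∂ν)))
    (wn : ℕ → Ω → EuclideanSpace ℝ (Fin dw))
    (hwnW : ∀ n ω, wn n ω ∈ W)
    (hwnmin : ∀ n ω, ∀ w' ∈ W,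
      ((S n ω).card : ℝ)⁻¹ * ∑ z ∈ S n ω, f (z, wn n ω) ≤
      ((S n ω).card : ℝ)⁻¹ * ∑ z ∈ S n ω, f (z, w'))
    (Wstar : Set (EuclideanSpace ℝ (Fin dw)))
    (hWstar : Wstar = {w | w ∈ W ∧ ∀ w' ∈ W, (∫ z, f (z, w) ∂ν) ≤ ∫ z, f (z, w') ∂ν})
    (hvalid : ∀ᵐ ω ∂P,
      Tendsto (fun n => ∫ z, f (z, wn n ω) ∂μ) atTop
        (𝓝 (sInf ((fun w => ∫ z, f (z, w) ∂μ) '' W)))) :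
    sInf ((fun w => ∫ z, f (z, w) ∂μ) '' Wstar) = sInf ((fun w => ∫ z, f (z, w) ∂μ) '' W) ∧
    (Wstar ∩ {w | w ∈ W ∧ ∀ w' ∈ W, (∫ z, f (z, w) ∂μ) ≤ ∫ z, f (z, w') ∂μ}).Nonempty := by
  -- One outcome `ω` is fixed at which all the almost sure statements used below hold.
  obtain ⟨T, hTW, hTc, hT⟩ :=
    (TopologicalSpace.IsSeparable.of_separableSpace W).exists_countable_dense_subset
  have hconvT := (ae_ball_iff hTc).2 fun w hw => hconv w (hTW hw)
  obtain ⟨ω, hω, hωμ⟩ := (hconvT.and hvalid).exists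
  obtain ⟨w₀, hw₀, φ, hφ, hlim⟩ := hW.tendsto_subseq fun n => hwnW n ω
  have hminν := limit_minimizes hD hW hf hν (S := fun k => S (φ k) ω)
    (fun k => hSne _ ω) (fun k => hSD _ ω) hTW hT
    (fun w hw => (hω w hw).comp hφ.tendsto_atTop) (fun k => hwnW (φ k) ω)
    (fun k => hwnmin (φ k) ω) hw₀ hlim
  have hcont := continuousOn_risk hD hW hf hμ
  have heq : ∫ z, f (z, w₀) ∂μ = sInf ((fun w => ∫ z, f (z, w) ∂μ) '' W) := by
    refine tendsto_nhds_unique ?_ (hωμ.comp hφ.tendsto_atTop)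
    exact (hcont w₀ hw₀).tendsto.comp
      (tendsto_nhdsWithin_iff.2 ⟨hlim, Eventually.of_forall fun k => hwnW (φ k) ω⟩)
  have hminμ : ∀ w' ∈ W, ∫ z, f (z, w₀) ∂μ ≤ ∫ z, f (z, w') ∂μ := fun w' hw' => by
    rw [heq]
    exact csInf_le (hW.image_of_continuousOn hcont).bddBelow ⟨w', hw', rfl⟩
  have hstar : w₀ ∈ Wstar := by
    rw [hWstar]
    exact ⟨hw₀, hminν⟩
  refine ⟨?_, w₀, hstar, hw₀, hminμ⟩
  rw [← heq]
  refine IsLeast.csInf_eq ⟨⟨w₀, hstar, rfl⟩, ?_⟩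
  rintro _ ⟨w, hw, rfl⟩
  rw [hWstar] at hw
  exact hminμ w hw.1
end

section
/- Let D = X × Y with X ⊂ R^{d_x}, Y ⊂ R^{d_y} compact sets such that every nonempty relatively open ball of D has positive Lebesgue measure, W ⊂ R^d a compact parameter space, f : D × W → R continuous (f(z,w) = ℓ(y_out(x;w), y)), and g : D → R an adapted score function. Suppose there exist z_1, z_2 ∈ D such that argmin_{w ∈ W} f(z_1, w) ∩ argmin_{w ∈ W} f(z_2, w) = ∅ (hypothesis H1). Let P denote the set of Borel probability measures on D that are absolutely continuous with respect to the Lebesgue measure on D. Then there exists r_0 ∈ (0,1) such that for every r ≤ r_0 there is a generating process μ ∈ P for which every minimizer w*_r ∈ argmin_{w ∈ W} ∫_D f(z, w) dν_r(z) satisfies ∫_D f(z, w*_r) dμ(z) > min_{w ∈ W} ∫_D f(z, w) dμ(z), where ν_r = (1/r) μ|_{A_r}, A_r = {z ∈ D : g(z) ≤ q^r}, and q^r is the r-th quantile of g(Z) under μ. (No-Free-Lunch: for every score-based pruning algorithm with an adapted score, there exists a data distribution and a compression level at which the algorithm is not valid.) -/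
/-!
The idea is to place mass `r` on a small ball around one of the two points and mass `1 - r` on a
small ball around the other, so that the pruning keeps exactly the first ball.

By compactness of `W`, disjointness of the two argmin sets is quantitative: for some `ε > 0`, no
`w` is `ε`-optimal for both `f (z1, ·)` and `f (z2, ·)` (`exists_gap`). This gap is stable under
small moves of `z2`, and level sets of `g` are null while relative balls are not, so we may assume
`g z1 ≠ g z2`, and by symmetry `g z1 < g z2`. Let `U1`, `U2` be the normalized restrictions of
Lebesgue measure to small relative balls around `z1`, `z2` whose `g`-values are separated, and let
`μ = r U1 + (1 - r) U2`. Any acceptance region of mass `r` keeps exactly `U1` (`restrict_mix`), so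
a minimizer of the pruned risk is nearly optimal for `f (z1, ·)`, hence at least `ε`-suboptimal for
`f (z2, ·)`. For small `r` the `μ`-risk is dominated by the part near `z2`, so such a minimizer
cannot minimize it (`exists_bad_measure`).
-/

open MeasureTheory Filter Topology Metric Set
open scoped ENNReal

/-- The risk under a probability measure carried by a set `S` on which `h` is `δ`-close to `c`. -/
lemma integral_near {E : Type*} [MetricSpace E] [MeasurableSpace E] [BorelSpace E]
    {D S : Set E} (hD : IsCompact D) (hS : MeasurableSet S) (hSD : S ⊆ D)
    (ν : Measure E) [IsProbabilityMeasure ν] (hν : ν Sᶜ = 0) {h : E → ℝ}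
    (hh : ContinuousOn h D) {c δ : ℝ} (hc : ∀ z ∈ S, |h z - c| ≤ δ) :
    Integrable h ν ∧ |∫ z, h z ∂ν - c| ≤ δ := by
  have hae : ∀ᵐ z ∂ν, z ∈ S := by rw [ae_iff]; exact hν
  have hres : ν.restrict S = ν := Measure.restrict_eq_self_of_ae_mem hae
  have hm : AEStronglyMeasurable h ν := by
    rw [← hres]
    exact ((hh.mono hSD).aestronglyMeasurable hS)
  obtain ⟨C, hC⟩ := hD.exists_bound_of_continuousOn hh
  have hint : Integrable h ν :=
    Integrable.of_bound hm C (hae.mono fun z hz => hC z (hSD hz))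
  refine ⟨hint, ?_⟩
  have h1 : ∫ z, h z ∂ν - c = ∫ z, (h z - c) ∂ν := by
    rw [integral_sub hint (integrable_const c)]; simp
  rw [h1]
  have h2 := norm_integral_le_of_norm_le_const (μ := ν) (f := fun z => h z - c) (C := δ)
    (hae.mono fun z hz => hc z hz)
  simpa using h2

/-- If `g` separates the carriers of `U1` and `U2`, every sublevel set of `g` whose mass under the
mixture is exactly the weight of `U1` cuts out `U1` and nothing of `U2`. -/
lemma restrict_mix {E : Type*} [MeasurableSpace E] {D S1 S2 : Set E} {g : E → ℝ} {c q : ℝ}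
    (h1D : S1 ⊆ D) (h1 : ∀ z ∈ S1, g z < c) (h2 : ∀ z ∈ S2, c < g z)
    (hA : MeasurableSet {z ∈ D | g z ≤ q})
    (U1 U2 : Measure E) [IsProbabilityMeasure U1] (hU1 : U1 S1ᶜ = 0)
    (hU2 : U2 S2ᶜ = 0) {a b : ℝ≥0∞} (ha0 : a ≠ 0) (hat : a ≠ ⊤) (hb0 : b ≠ 0)
    (hq : (a • U1 + b • U2) {z ∈ D | g z ≤ q} = a) :
    a⁻¹ • (a • U1 + b • U2).restrict {z ∈ D | g z ≤ q} = U1 := by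
  simp only [Measure.coe_add, Measure.coe_smul, Pi.add_apply, Pi.smul_apply, smul_eq_mul] at hq
  have key : U1 {z ∈ D | g z ≤ q} = 1 ∧ U2 {z ∈ D | g z ≤ q} = 0 := by
    rcases le_or_gt q c with hqc | hqc
    · have h0 : U2 {z ∈ D | g z ≤ q} = 0 := by
        refine measure_mono_null ?_ hU2
        intro z hz hzS
        have := h2 z hzS
        have := hz.2
        linarith
      rw [h0, mul_zero, add_zero] at hq
      refine ⟨?_, h0⟩
      exact (ENNReal.mul_right_inj ha0 hat).1 (by rw [hq, mul_one])
    · have h1' : U1 {z ∈ D | g z ≤ q} = 1 := by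
        rw [← prob_compl_eq_zero_iff hA]
        refine measure_mono_null ?_ hU1
        intro z hz hzS
        exact hz ⟨h1D hzS, ((h1 z hzS).trans hqc).le⟩
      refine ⟨h1', ?_⟩
      rw [h1', mul_one] at hq
      have h3 : b * U2 {z ∈ D | g z ≤ q} = 0 :=
        (ENNReal.add_right_inj hat).1 (by rw [hq, add_zero])
      exact (mul_eq_zero.1 h3).resolve_left hb0
  have e1 : U1.restrict {z ∈ D | g z ≤ q} = U1 := by
    apply Measure.restrict_eq_self_of_ae_mem
    rw [ae_iff]
    exact (prob_compl_eq_zero_iff hA).2 key.1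
  have e2 : U2.restrict {z ∈ D | g z ≤ q} = 0 := Measure.restrict_eq_zero.2 key.2
  rw [Measure.restrict_add, Measure.restrict_smul, Measure.restrict_smul, e1, e2, smul_zero,
    add_zero, smul_smul, ENNReal.inv_mul_cancel ha0 hat, one_smul]

/-- Quantitative form of the disjointness of two argmin sets. -/
lemma exists_gap {P : Type*} [TopologicalSpace P] {W : Set P} (hW : IsCompact W)
    (hWne : W.Nonempty) {φ ψ : P → ℝ} (hφ : ContinuousOn φ W) (hψ : ContinuousOn ψ W)
    (hdisj : {w | w ∈ W ∧ ∀ w' ∈ W, φ w ≤ φ w'} ∩ {w | w ∈ W ∧ ∀ w' ∈ W, ψ w ≤ ψ w'} = ∅) :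
    ∃ ε > (0 : ℝ), ∃ w1 ∈ W, ∃ w2 ∈ W, ∀ w ∈ W, ε ≤ φ w - φ w1 ∨ ε ≤ ψ w - ψ w2 := by
  obtain ⟨w1, hw1, hm1⟩ := hW.exists_isMinOn hWne hφ
  obtain ⟨w2, hw2, hm2⟩ := hW.exists_isMinOn hWne hψ
  obtain ⟨w0, hw0, hm0⟩ := hW.exists_isMinOn hWne
    (f := fun w => max (φ w - φ w1) (ψ w - ψ w2))
    ((hφ.sub continuousOn_const).sup (hψ.sub continuousOn_const))
  refine ⟨max (φ w0 - φ w1) (ψ w0 - ψ w2), ?_, w1, hw1, w2, hw2, fun w hw => ?_⟩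
  · by_contra hcon
    have hcon := not_lt.1 hcon
    rw [max_le_iff] at hcon
    have : w0 ∈ ({w | w ∈ W ∧ ∀ w' ∈ W, φ w ≤ φ w'} ∩
        {w | w ∈ W ∧ ∀ w' ∈ W, ψ w ≤ ψ w'} : Set P) := by
      refine ⟨⟨hw0, fun w' hw' => ?_⟩, ⟨hw0, fun w' hw' => ?_⟩⟩
      · have : φ w1 ≤ φ w' := hm1 hw'
        linarith [hcon.1]
      · have : ψ w2 ≤ ψ w' := hm2 hw'
        linarith [hcon.2]
    rw [hdisj] at this
    exact this
  · exact le_max_iff.1 (hm0 hw)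

/-- Uniform continuity of the loss in the data variable, uniformly over the parameters. -/
lemma exists_radius {E P : Type*} [PseudoMetricSpace E] [PseudoMetricSpace P] {D : Set E}
    {W : Set P} (hD : IsCompact D) (hW : IsCompact W) {f : E × P → ℝ}
    (hf : ContinuousOn f (D ×ˢ W)) {η : ℝ} (hη : 0 < η) :
    ∃ ρ > (0 : ℝ), ∀ z ∈ D, ∀ z' ∈ D, dist z' z < ρ → ∀ w ∈ W, |f (z', w) - f (z, w)| ≤ η := by
  have hu := (hD.prod hW).uniformContinuousOn_of_continuous hf
  obtain ⟨ρ, hρ, h⟩ := Metric.uniformContinuousOn_iff.1 hu η hη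
  refine ⟨ρ, hρ, fun z hz z' hz' hd w hw => ?_⟩
  have := h (z', w) ⟨hz', hw⟩ (z, w) ⟨hz, hw⟩ (by simpa [Prod.dist_eq] using hd)
  rw [Real.dist_eq] at this
  exact this.le

/-- The construction in the case `g z1 < g z2`, with `m` the reference measure. -/
lemma exists_bad_measure {E P : Type*} [MetricSpace E] [MeasurableSpace E] [BorelSpace E]
    [PseudoMetricSpace P] (m : Measure E) [IsFiniteMeasureOnCompacts m] {D : Set E} {W : Set P}
    (hD : IsCompact D) (hW : IsCompact W)
    (hDpos : ∀ z ∈ D, ∀ ρ > (0:ℝ), 0 < m (D ∩ Metric.ball z ρ))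
    {f : E × P → ℝ} (hf : ContinuousOn f (D ×ˢ W)) {g : E → ℝ} (hg : ContinuousOn g D)
    {z1 z2 : E} (hz1 : z1 ∈ D) (hz2 : z2 ∈ D) (hlt : g z1 < g z2) {ε : ℝ} (hε : 0 < ε)
    {w1 w2 : P} (hw1 : w1 ∈ W) (hw2 : w2 ∈ W)
    (hgap : ∀ w ∈ W, ε ≤ f (z1, w) - f (z1, w1) ∨ ε ≤ f (z2, w) - f (z2, w2)) :
    ∃ r0 ∈ Set.Ioo (0:ℝ) 1, ∀ r : ℝ, 0 < r → r ≤ r0 →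
      ∃ μ : Measure E,
        IsProbabilityMeasure μ ∧ μ ≪ m ∧ μ Dᶜ = 0 ∧
        ∀ q : ℝ, μ {z ∈ D | g z ≤ q} = ENNReal.ofReal r →
          ∀ wr ∈ W,
            (∀ w' ∈ W,
              (∫ z, f (z, wr) ∂((ENNReal.ofReal r)⁻¹ • μ.restrict {z ∈ D | g z ≤ q})) ≤
               ∫ z, f (z, w') ∂((ENNReal.ofReal r)⁻¹ • μ.restrict {z ∈ D | g z ≤ q})) →
            sInf ((fun w => ∫ z, f (z, w) ∂μ) '' W) < ∫ z, f (z, wr) ∂μ := by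
  have hsec : ∀ w ∈ W, ContinuousOn (fun z => f (z, w)) D := fun w hw =>
    hf.comp (by fun_prop) fun z hz => ⟨hz, hw⟩
  obtain ⟨M, hM⟩ := (hD.prod hW).exists_bound_of_continuousOn hf
  have hM' : ∀ z ∈ D, ∀ w ∈ W, |f (z, w)| ≤ M := fun z hz w hw => hM (z, w) ⟨hz, hw⟩
  have hM0 : 0 ≤ M := (abs_nonneg _).trans (hM' z1 hz1 w1 hw1)
  obtain ⟨ρ1, hρ1, hclose⟩ := exists_radius hD hW hf (η := ε / 8) (by positivity)
  obtain ⟨c, hc1, hc2⟩ := exists_between hlt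
  obtain ⟨ρ2, hρ2, hsep1⟩ := Metric.continuousOn_iff.1 hg z1 hz1 (c - g z1) (by linarith)
  obtain ⟨ρ3, hρ3, hsep2⟩ := Metric.continuousOn_iff.1 hg z2 hz2 (g z2 - c) (by linarith)
  set ρ := min ρ1 (min ρ2 ρ3) with hρdef
  have hρ : 0 < ρ := lt_min hρ1 (lt_min hρ2 hρ3)
  have hρ1' : ρ ≤ ρ1 := min_le_left _ _
  have hρ2' : ρ ≤ ρ2 := (min_le_right _ _).trans (min_le_left _ _)
  have hρ3' : ρ ≤ ρ3 := (min_le_right _ _).trans (min_le_right _ _)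
  set S1 := D ∩ Metric.ball z1 ρ with hS1
  set S2 := D ∩ Metric.ball z2 ρ with hS2
  have hm1 : MeasurableSet S1 := hD.measurableSet.inter measurableSet_ball
  have hm2 : MeasurableSet S2 := hD.measurableSet.inter measurableSet_ball
  have hg1 : ∀ z ∈ S1, g z < c := fun z hz => by
    have := hsep1 z hz.1 (lt_of_lt_of_le hz.2 hρ2')
    rw [Real.dist_eq, abs_lt] at this
    linarith [this.2]
  have hg2 : ∀ z ∈ S2, c < g z := fun z hz => by
    have := hsep2 z hz.1 (lt_of_lt_of_le hz.2 hρ3')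
    rw [Real.dist_eq, abs_lt] at this
    linarith [this.1]
  have hfin : ∀ z, m (D ∩ Metric.ball z ρ) ≠ ⊤ := fun z =>
    ((measure_mono inter_subset_left).trans_lt hD.measure_lt_top).ne
  set U1 := ProbabilityTheory.cond m S1 with hU1def
  set U2 := ProbabilityTheory.cond m S2 with hU2def
  have : IsProbabilityMeasure U1 :=
    ProbabilityTheory.cond_isProbabilityMeasure_of_finite (hDpos z1 hz1 ρ hρ).ne' (hfin z1)
  have : IsProbabilityMeasure U2 :=
    ProbabilityTheory.cond_isProbabilityMeasure_of_finite (hDpos z2 hz2 ρ hρ).ne' (hfin z2)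
  have hU1 : U1 S1ᶜ = 0 := by
    rw [hU1def, ProbabilityTheory.cond_apply hm1]; simp
  have hU2 : U2 S2ᶜ = 0 := by
    rw [hU2def, ProbabilityTheory.cond_apply hm2]; simp
  have I1 : ∀ w ∈ W, Integrable (fun z => f (z, w)) U1 ∧
      |∫ z, f (z, w) ∂U1 - f (z1, w)| ≤ ε / 8 := fun w hw =>
    integral_near hD hm1 inter_subset_left U1 hU1 (hsec w hw) fun z hz =>
      hclose z1 hz1 z hz.1 (lt_of_lt_of_le hz.2 hρ1') w hw
  have I2 : ∀ w ∈ W, Integrable (fun z => f (z, w)) U2 ∧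
      |∫ z, f (z, w) ∂U2 - f (z2, w)| ≤ ε / 8 := fun w hw =>
    integral_near hD hm2 inter_subset_left U2 hU2 (hsec w hw) fun z hz =>
      hclose z2 hz2 z hz.1 (lt_of_lt_of_le hz.2 hρ1') w hw
  have B1 : ∀ w ∈ W, |∫ z, f (z, w) ∂U1| ≤ M := fun w hw => by
    simpa using (integral_near hD hm1 inter_subset_left U1 hU1 (hsec w hw) (c := 0) (δ := M)
      fun z hz => by simpa using hM' z hz.1 w hw).2
  have B2 : ∀ w ∈ W, |∫ z, f (z, w) ∂U2| ≤ M := fun w hw => by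
    simpa using (integral_near hD hm2 inter_subset_left U2 hU2 (hsec w hw) (c := 0) (δ := M)
      fun z hz => by simpa using hM' z hz.1 w hw).2
  -- Passing from a pruned minimizer to `w2` gains at least `(1 - r) * (3 * ε / 4)` near `z2` and
  -- costs at most `2 * M * r` near `z1`; this `r0` makes the gain exceed the cost.
  refine ⟨min (1 / 2) (ε / (8 * (M + 1))), ⟨by positivity, ?_⟩, fun r hr hrr => ?_⟩
  · exact (min_le_left _ _).trans_lt (by norm_num)
  have hr2 : r ≤ 1 / 2 := hrr.trans (min_le_left _ _)
  have hrM : r * (8 * (M + 1)) ≤ ε :=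
    (le_div_iff₀ (by positivity)).1 (hrr.trans (min_le_right _ _))
  have hRisk : ∀ w ∈ W, ∫ z, f (z, w) ∂(ENNReal.ofReal r • U1 + ENNReal.ofReal (1 - r) • U2) =
      r * ∫ z, f (z, w) ∂U1 + (1 - r) * ∫ z, f (z, w) ∂U2 := fun w hw => by
    rw [integral_add_measure ((I1 w hw).1.smul_measure ENNReal.ofReal_ne_top)
      ((I2 w hw).1.smul_measure ENNReal.ofReal_ne_top), integral_smul_measure,
      integral_smul_measure, ENNReal.toReal_ofReal hr.le,
      ENNReal.toReal_ofReal (by linarith), smul_eq_mul, smul_eq_mul]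
  refine ⟨ENNReal.ofReal r • U1 + ENNReal.ofReal (1 - r) • U2, ⟨?_⟩, ?_, ?_, ?_⟩
  · simp only [Measure.coe_add, Measure.coe_smul, Pi.add_apply, Pi.smul_apply, smul_eq_mul,
      measure_univ, mul_one]
    rw [← ENNReal.ofReal_add hr.le (by linarith)]
    simp
  · exact Measure.AbsolutelyContinuous.add_left
      (ProbabilityTheory.cond_absolutelyContinuous.smul_left _)
      (ProbabilityTheory.cond_absolutelyContinuous.smul_left _)
  · have h1 : U1 Dᶜ = 0 := measure_mono_null (compl_subset_compl.2 inter_subset_left) hU1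
    have h2 : U2 Dᶜ = 0 := measure_mono_null (compl_subset_compl.2 inter_subset_left) hU2
    simp [h1, h2]
  · intro q hq wr hwr hmin
    have hA : MeasurableSet {z ∈ D | g z ≤ q} :=
      (hg.preimage_isClosed_of_isClosed hD.isClosed isClosed_Iic).measurableSet
    rw [restrict_mix inter_subset_left hg1 hg2 hA U1 U2 hU1 hU2
      (ENNReal.ofReal_pos.2 hr).ne' ENNReal.ofReal_ne_top
      (ENNReal.ofReal_pos.2 (by linarith)).ne' hq] at hmin
    have hle : sInf ((fun w => ∫ z, f (z, w)
        ∂(ENNReal.ofReal r • U1 + ENNReal.ofReal (1 - r) • U2)) '' W) ≤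
        ∫ z, f (z, w2) ∂(ENNReal.ofReal r • U1 + ENNReal.ofReal (1 - r) • U2) := by
      refine csInf_le ⟨-M, ?_⟩ (mem_image_of_mem _ hw2)
      rintro _ ⟨w, hw, rfl⟩
      simp only
      rw [hRisk w hw]
      have b1 := (abs_le.1 (B1 w hw)).1
      have b2 := (abs_le.1 (B2 w hw)).1
      nlinarith
    refine hle.trans_lt ?_
    rw [hRisk w2 hw2, hRisk wr hwr]
    have hfar : ε ≤ f (z2, wr) - f (z2, w2) := by
      refine (hgap wr hwr).resolve_left fun h => ?_
      have a1 := abs_le.1 (I1 wr hwr).2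
      have a2 := abs_le.1 (I1 w1 hw1).2
      linarith [a1.1, a2.2, hmin w1 hw1]
    have a1 := abs_le.1 (I2 wr hwr).2
    have a2 := abs_le.1 (I2 w2 hw2).2
    have hgain : 3 * ε / 4 ≤ ∫ z, f (z, wr) ∂U2 - ∫ z, f (z, w2) ∂U2 := by
      linarith [a1.1, a2.2]
    have hcost : -(2 * M) ≤ ∫ z, f (z, wr) ∂U1 - ∫ z, f (z, w2) ∂U1 := by
      linarith [(abs_le.1 (B1 wr hwr)).1, (abs_le.1 (B1 w2 hw2)).2]
    have k1 := mul_le_mul_of_nonneg_left hcost hr.le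
    have k2 := mul_le_mul_of_nonneg_left hgain (by linarith : (0:ℝ) ≤ 1 - r)
    have k3 : ε * r ≤ ε * (1 / 2) := mul_le_mul_of_nonneg_left hr2 hε.le
    nlinarith

/-- (Theorem 3 of the paper: No-Free-Lunch.)  Let `D = X × Y` be a
compact product data space all of whose nonempty relatively open balls have positive
Lebesgue measure, `W` a compact parameter space, `f` the continuous per-example loss,
`g` an adapted score.  Under hypothesis (H1), there is `r₀ ∈ (0,1)` such that for every
`0 < r ≤ r₀` there exists an absolutely continuous generating process `μ` supported on
`D` such that every minimizer `w*` over `W` of the pruned risk `E_{ν_r} f(Z, ·)`,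
`ν_r = (1/r) μ|_{A_r}`, `A_r = {z ∈ D : g z ≤ q^r}`, has μ-risk strictly larger than
`min_{w ∈ W} E_μ f(Z, w)`. -/
theorem stmt_8 {dx dy dw : ℕ}
    (Xs : Set (EuclideanSpace ℝ (Fin dx))) (Ys : Set (EuclideanSpace ℝ (Fin dy)))
    (hXs : IsCompact Xs) (hYs : IsCompact Ys)
    (D : Set (EuclideanSpace ℝ (Fin dx) × EuclideanSpace ℝ (Fin dy)))
    (hDXY : D = Xs ×ˢ Ys)
    (hDpos : ∀ z ∈ D, ∀ ρ > (0:ℝ), 0 < volume (D ∩ Metric.ball z ρ))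
    (W : Set (EuclideanSpace ℝ (Fin dw))) (hW : IsCompact W) (hWne : W.Nonempty)
    (f : (EuclideanSpace ℝ (Fin dx) × EuclideanSpace ℝ (Fin dy)) ×
          EuclideanSpace ℝ (Fin dw) → ℝ)
    (hf : ContinuousOn f (D ×ˢ W))
    (g : EuclideanSpace ℝ (Fin dx) × EuclideanSpace ℝ (Fin dy) → ℝ)
    (hgcont : ContinuousOn g D)
    (hgadapted : ∀ c : ℝ, volume {z ∈ D | g z = c} = 0)
    (z1 z2 : EuclideanSpace ℝ (Fin dx) × EuclideanSpace ℝ (Fin dy))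
    (hz1 : z1 ∈ D) (hz2 : z2 ∈ D)
    (hH1 : {w | w ∈ W ∧ ∀ w' ∈ W, f (z1, w) ≤ f (z1, w')} ∩
           {w | w ∈ W ∧ ∀ w' ∈ W, f (z2, w) ≤ f (z2, w')} = ∅) :
    ∃ r0 ∈ Set.Ioo (0:ℝ) 1, ∀ r : ℝ, 0 < r → r ≤ r0 →
      ∃ μ : Measure (EuclideanSpace ℝ (Fin dx) × EuclideanSpace ℝ (Fin dy)),
        IsProbabilityMeasure μ ∧ μ ≪ volume ∧ μ Dᶜ = 0 ∧
        ∀ q : ℝ, μ {z ∈ D | g z ≤ q} = ENNReal.ofReal r →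
          ∀ wr ∈ W,
            (∀ w' ∈ W,
              (∫ z, f (z, wr) ∂((ENNReal.ofReal r)⁻¹ • μ.restrict {z ∈ D | g z ≤ q})) ≤
               ∫ z, f (z, w') ∂((ENNReal.ofReal r)⁻¹ • μ.restrict {z ∈ D | g z ≤ q})) →
            sInf ((fun w => ∫ z, f (z, w) ∂μ) '' W) < ∫ z, f (z, wr) ∂μ := by
  have hD : IsCompact D := hDXY ▸ hXs.prod hYs
  have hsec : ∀ z ∈ D, ContinuousOn (fun w => f (z, w)) W := fun z hz =>
    hf.comp (by fun_prop) fun w hw => ⟨hz, hw⟩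
  obtain ⟨ε, hε, w1, hw1, w2, hw2, hgap⟩ :=
    exists_gap hW hWne (hsec z1 hz1) (hsec z2 hz2) hH1
  obtain ⟨ρ, hρ, hclose⟩ := exists_radius hD hW hf (η := ε / 4) (by positivity)
  -- Move `z2` off the null level set of `g` through `z1`, giving up half of the gap.
  obtain ⟨z3, ⟨hz3, hz3ρ⟩, hne⟩ : ∃ z3 ∈ D ∩ Metric.ball z2 ρ, g z3 ≠ g z1 := by
    by_contra! hcon
    refine (hDpos z2 hz2 ρ hρ).ne' (measure_mono_null ?_ (hgadapted (g z1)))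
    exact fun z hz => ⟨hz.1, hcon z hz⟩
  have hgap' : ∀ w ∈ W, ε / 2 ≤ f (z1, w) - f (z1, w1) ∨ ε / 2 ≤ f (z3, w) - f (z3, w2) := by
    intro w hw
    refine (hgap w hw).imp (fun h => by linarith) fun h => ?_
    have a1 := abs_le.1 (hclose z2 hz2 z3 hz3 hz3ρ w hw)
    have a2 := abs_le.1 (hclose z2 hz2 z3 hz3 hz3ρ w2 hw2)
    linarith [a1.1, a2.2]
  rcases lt_or_gt_of_ne hne with hlt | hlt
  · exact exists_bad_measure volume hD hW hDpos hf hgcont hz3 hz1 hlt (half_pos hε) hw2 hw1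
      fun w hw => (hgap' w hw).symm
  · exact exists_bad_measure volume hD hW hDpos hf hgcont hz1 hz3 hlt (half_pos hε) hw1 hw2 hgap'
end

section
/- Let D be a compact subset of a Euclidean space such that every nonempty relatively open ball of D has positive Lebesgue measure, W a compact subset of R^d, f : D × W → R continuous, and g : D → R an adapted score function (continuous, with every level set g^{-1}({c}) of Lebesgue measure zero). If there exist z_1, z_2 ∈ D with argmin_{w ∈ W} f(z_1, w) ∩ argmin_{w ∈ W} f(z_2, w) = ∅, then there exist z'_1, z'_2 ∈ D with g(z'_1) < g(z'_2) and argmin_{w ∈ W} f(z'_1, w) ∩ argmin_{w ∈ W} f(z'_2, w) = ∅. -/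
/-!
The set of `z ∈ D` whose minimizers meet those of `z2` is closed, because it is the projection
to `D` of a closed subset of the compact set `D ×ˢ W` (`isClosed_argmin_meets`). Hence disjointness
from the minimizers at `z2` persists on a relative ball of `D` around `z1`. That ball has positive
measure while the level set of `g` through `z2` is null, so the ball contains a point whose score
differs from `g z2`; ordering this point and `z2` by score gives the required pair.
-/

open MeasureTheory Filter Topology Metric Set

/-- The points of `D` whose minimizer set meets that of `z2` form a closed set: each condition on
a competitor `w'` is closed in the compact `D ×ˢ W`, and the projection of a compact set is
closed. -/
theorem isClosed_argmin_meets {X Y : Type*} [TopologicalSpace X] [T2Space X]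
    [TopologicalSpace Y] [T2Space Y] {D : Set X} (hD : IsCompact D) {W : Set Y}
    (hW : IsCompact W) {f : X × Y → ℝ} (hf : ContinuousOn f (D ×ˢ W)) {z2 : X} (hz2 : z2 ∈ D) :
    IsClosed {z | z ∈ D ∧ ∃ w ∈ W, (∀ w' ∈ W, f (z, w) ≤ f (z, w')) ∧
      ∀ w' ∈ W, f (z2, w) ≤ f (z2, w')} := by
  have hDW := hD.prod hW
  have hK : IsClosed (⋂ w' ∈ W, ({p ∈ D ×ˢ W | f p ≤ f (p.1, w')} ∩
      {p ∈ D ×ˢ W | f (z2, p.2) ≤ f (z2, w')})) := by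
    refine isClosed_biInter fun w' hw' => IsClosed.inter ?_ ?_
    · exact hDW.isClosed.isClosed_le hf
        (hf.comp (f := fun p : X × Y => (p.1, w')) (by fun_prop) fun p hp => ⟨hp.1, hw'⟩)
    · exact hDW.isClosed.isClosed_le
        (hf.comp (f := fun p : X × Y => (z2, p.2)) (by fun_prop) fun p hp => ⟨hz2, hp.2⟩)
        continuousOn_const
  convert ((hDW.inter_right hK).image continuous_fst).isClosed using 1
  ext z
  simp only [mem_image, mem_inter_iff, mem_iInter₂, mem_ofPred_eq, mem_prod]
  constructor
  · rintro ⟨hz, w, hw, h1, h2⟩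
    exact ⟨(z, w), ⟨⟨hz, hw⟩, fun w' hw' => ⟨⟨⟨hz, hw⟩, h1 w' hw'⟩, ⟨hz, hw⟩, h2 w' hw'⟩⟩, rfl⟩
  · rintro ⟨⟨x, w⟩, ⟨⟨hz, hw⟩, h⟩, rfl⟩
    exact ⟨hz, w, hw, fun w' hw' => (h w' hw').1.2, fun w' hw' => (h w' hw').2.2⟩

/-- Let `D` be a compact subset of a Euclidean space such that every
nonempty relatively open ball of `D` has positive Lebesgue measure, `W` compact,
`f : D × W → ℝ` continuous, and `g : D → ℝ` an adapted score function (continuous, every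
level set Lebesgue-null).  If there exist `z₁, z₂ ∈ D` whose minimizer sets
`argmin_{w ∈ W} f (zᵢ, w)` are disjoint, then there exist `z₁', z₂' ∈ D` with
`g z₁' < g z₂'` and disjoint minimizer sets. -/
theorem stmt_10 {dz dw : ℕ}
    (D : Set (EuclideanSpace ℝ (Fin dz))) (hD : IsCompact D)
    (hDpos : ∀ z ∈ D, ∀ ρ > (0:ℝ), 0 < volume (D ∩ Metric.ball z ρ))
    (W : Set (EuclideanSpace ℝ (Fin dw))) (hW : IsCompact W) (hWne : W.Nonempty)
    (f : EuclideanSpace ℝ (Fin dz) × EuclideanSpace ℝ (Fin dw) → ℝ)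
    (hf : ContinuousOn f (D ×ˢ W))
    (g : EuclideanSpace ℝ (Fin dz) → ℝ) (hgcont : ContinuousOn g D)
    (hgadapted : ∀ c : ℝ, volume {z ∈ D | g z = c} = 0)
    (z1 z2 : EuclideanSpace ℝ (Fin dz)) (hz1 : z1 ∈ D) (hz2 : z2 ∈ D)
    (hdisj : {w | w ∈ W ∧ ∀ w' ∈ W, f (z1, w) ≤ f (z1, w')} ∩
             {w | w ∈ W ∧ ∀ w' ∈ W, f (z2, w) ≤ f (z2, w')} = ∅) :
    ∃ z1' ∈ D, ∃ z2' ∈ D, g z1' < g z2' ∧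
      {w | w ∈ W ∧ ∀ w' ∈ W, f (z1', w) ≤ f (z1', w')} ∩
      {w | w ∈ W ∧ ∀ w' ∈ W, f (z2', w) ≤ f (z2', w')} = ∅ := by
  have hcl := isClosed_argmin_meets hD hW hf hz2
  obtain ⟨ρ, hρ, hball⟩ := Metric.isOpen_iff.1 hcl.isOpen_compl z1 (by
    rintro ⟨-, w, hw, h1, h2⟩
    exact (Set.eq_empty_iff_forall_notMem.1 hdisj) w ⟨⟨hw, h1⟩, hw, h2⟩)
  obtain ⟨z, hzD, hzρ, hne⟩ : ∃ z ∈ D, z ∈ ball z1 ρ ∧ g z ≠ g z2 := by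
    by_contra! hcon
    refine (hDpos z1 hz1 ρ hρ).ne' (measure_mono_null ?_ (hgadapted (g z2)))
    exact fun z hz => ⟨hz.1, hcon z hz.1 hz.2⟩
  have hzdisj : {w | w ∈ W ∧ ∀ w' ∈ W, f (z, w) ≤ f (z, w')} ∩
      {w | w ∈ W ∧ ∀ w' ∈ W, f (z2, w) ≤ f (z2, w')} = ∅ := by
    refine Set.eq_empty_iff_forall_notMem.2 ?_
    rintro w ⟨⟨hw, h1⟩, -, h2⟩
    exact hball hzρ ⟨hzD, w, hw, h1, h2⟩
  rcases hne.lt_or_gt with h | h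
  · exact ⟨z, hzD, z2, hz2, h, hzdisj⟩
  · exact ⟨z2, hz2, z, hzD, h, by rw [Set.inter_comm]; exact hzdisj⟩
end

section
/- Let D be a compact subset of a Euclidean space, W a compact subset of R^d, and f : D × W → R continuous. Let z_1, z_2 ∈ D be such that W_1 = argmin_{w ∈ W} f(z_1, w) and W_2 = argmin_{w ∈ W} f(z_2, w) are disjoint. Then there exist δ > 0 and ρ_0 > 0 such that for every 0 < ρ ≤ ρ_0, every w_1 ∈ W with d(w_1, W_1) ≤ δ, and every w*_2 ∈ W_2: inf_{z ∈ B(z_2, ρ) ∩ D} f(z, w_1) > sup_{z ∈ B(z_2, ρ) ∩ D} f(z, w*_2), where B(z_2, ρ) is the Euclidean ball of center z_2 and radius ρ. -/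
/-!
The function `f (z2, ·)` attains a minimum `f (z2, a)` on the compact set `W1`, and as `W1` misses
`W2` this value exceeds the global minimum `f (z2, b)` over `W`; let `g > 0` be the gap.
Uniform continuity of `f` on the compact set `D ×ˢ W` yields `η > 0` such that moving `z2` and `w`
by less than `η` changes `f` by less than `g / 4`. Hence, with `δ = η / 2` and `ρ0 = η`, the
values at `w1` near `W1` are at least `f (z2, a) - g / 4`, whereas those at `w2 ∈ W2` are at most
`f (z2, b) + g / 4`.
-/

open MeasureTheory Filter Topology Metric Set

/-- Let `D` be compact, `W ⊂ ℝ^d` compact, `f : D × W → ℝ` continuous,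
and `z₁, z₂ ∈ D` with disjoint minimizer sets `W₁, W₂`.  Then there are `δ > 0` and
`ρ₀ > 0` such that for all `0 < ρ ≤ ρ₀`, every `w₁ ∈ W` with `dist (w₁, W₁) ≤ δ` and
every `w₂* ∈ W₂` satisfy
`sup_{z ∈ B(z₂,ρ) ∩ D} f (z, w₂*) < inf_{z ∈ B(z₂,ρ) ∩ D} f (z, w₁)`. -/
theorem stmt_11 {dz dw : ℕ}
    (D : Set (EuclideanSpace ℝ (Fin dz))) (hD : IsCompact D)
    (W : Set (EuclideanSpace ℝ (Fin dw))) (hW : IsCompact W) (hWne : W.Nonempty)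
    (f : EuclideanSpace ℝ (Fin dz) × EuclideanSpace ℝ (Fin dw) → ℝ)
    (hf : ContinuousOn f (D ×ˢ W))
    (z1 z2 : EuclideanSpace ℝ (Fin dz)) (hz1 : z1 ∈ D) (hz2 : z2 ∈ D)
    (W1 W2 : Set (EuclideanSpace ℝ (Fin dw)))
    (hW1 : W1 = {w | w ∈ W ∧ ∀ w' ∈ W, f (z1, w) ≤ f (z1, w')})
    (hW2 : W2 = {w | w ∈ W ∧ ∀ w' ∈ W, f (z2, w) ≤ f (z2, w')})
    (hdisj : W1 ∩ W2 = ∅) :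
    ∃ δ > (0:ℝ), ∃ ρ0 > (0:ℝ), ∀ ρ, 0 < ρ → ρ ≤ ρ0 →
      ∀ w1 ∈ W, infDist w1 W1 ≤ δ →
        ∀ w2 ∈ W2,
          sSup ((fun z => f (z, w2)) '' (Metric.ball z2 ρ ∩ D)) <
          sInf ((fun z => f (z, w1)) '' (Metric.ball z2 ρ ∩ D)) := by
  have hc2 : ContinuousOn (fun w => f (z2, w)) W :=
    hf.comp (by fun_prop) (fun w hw => ⟨hz2, hw⟩)
  have hc1 : ContinuousOn (fun w => f (z1, w)) W :=
    hf.comp (by fun_prop) (fun w hw => ⟨hz1, hw⟩)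
  obtain ⟨c, hcW, hcmin⟩ := hW.exists_isMinOn hWne hc1
  obtain ⟨b, hbW, hbmin⟩ := hW.exists_isMinOn hWne hc2
  have hW1sub : W1 ⊆ W := by
    rw [hW1]
    exact fun w hw => hw.1
  have hcW1 : c ∈ W1 := by
    rw [hW1]
    exact ⟨hcW, fun w' hw' => hcmin hw'⟩
  -- `W1` is a sublevel set of `f (z1, ·)` on `W`, hence compact.
  have hW1c : IsCompact W1 := by
    have h : W1 = W ∩ (fun w => f (z1, w)) ⁻¹' Iic (f (z1, c)) := by
      rw [hW1]
      ext w
      exact ⟨fun h => ⟨h.1, h.2 c hcW⟩, fun h => ⟨h.1, fun w' hw' => le_trans h.2 (hcmin hw')⟩⟩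
    rw [h]
    exact hW.of_isClosed_subset (hc1.preimage_isClosed_of_isClosed hW.isClosed isClosed_Iic)
      inter_subset_left
  obtain ⟨a, haW1, hamin⟩ := hW1c.exists_isMinOn ⟨c, hcW1⟩ (hc2.mono hW1sub)
  have hgap : f (z2, b) < f (z2, a) := by
    by_contra! h
    have ha2 : a ∈ W2 := by
      rw [hW2]
      exact ⟨hW1sub haW1, fun w' hw' => h.trans (hbmin hw')⟩
    exact (hdisj ▸ (⟨haW1, ha2⟩ : a ∈ W1 ∩ W2) : a ∈ (∅ : Set _))
  obtain ⟨η, hη, hu⟩ := Metric.uniformContinuousOn_iff.1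
    ((hD.prod hW).uniformContinuousOn_of_continuous hf) ((f (z2, a) - f (z2, b)) / 4)
    (by linarith)
  refine ⟨η / 2, by positivity, η, hη, fun ρ hρ hρη w1 hw1 hd w2 hw2 => ?_⟩
  rw [hW2] at hw2
  obtain ⟨e, heW1, he⟩ := (infDist_lt_iff ⟨c, hcW1⟩).1 (hd.trans_lt (half_lt_self hη))
  have hne : (Metric.ball z2 ρ ∩ D).Nonempty := ⟨z2, mem_ball_self hρ, hz2⟩
  have hsup : sSup ((fun z => f (z, w2)) '' (Metric.ball z2 ρ ∩ D)) ≤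
      f (z2, b) + (f (z2, a) - f (z2, b)) / 4 := by
    refine csSup_le (hne.image _) ?_
    rintro _ ⟨z, ⟨hz, hzD⟩, rfl⟩
    have h := hu (z, w2) ⟨hzD, hw2.1⟩ (z2, w2) ⟨hz2, hw2.1⟩ (by
      rw [Prod.dist_eq, dist_self]
      exact max_lt (lt_of_lt_of_le hz hρη) hη)
    rw [Real.dist_eq, abs_lt] at h
    have h2 := hw2.2 b hbW
    dsimp only
    linarith [h.2]
  have hinf : f (z2, a) - (f (z2, a) - f (z2, b)) / 4 ≤
      sInf ((fun z => f (z, w1)) '' (Metric.ball z2 ρ ∩ D)) := by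
    refine le_csInf (hne.image _) ?_
    rintro _ ⟨z, ⟨hz, hzD⟩, rfl⟩
    have h := hu (z, w1) ⟨hzD, hw1⟩ (z2, e) ⟨hz2, hW1sub heW1⟩ (by
      rw [Prod.dist_eq]
      exact max_lt (lt_of_lt_of_le hz hρη) he)
    rw [Real.dist_eq, abs_lt] at h
    have h2 : f (z2, a) ≤ f (z2, e) := hamin heW1
    dsimp only
    linarith [h.1]
  linarith
end

section
/- Generalized strong law of large numbers for triangular arrays with conditionally centered rows: let {Y_{n,i} : 1 ≤ i ≤ n, n ≥ 1} be a triangular array of real random variables such that (a) for all n ≥ 1 and 1 ≤ i ≤ n, E[ Y_{n,i} | F_{n,i} ] = 0 almost surely, where F_{n,i} = σ( Y_{n,j} : 1 ≤ j ≤ n, j ≠ i ) is the σ-algebra generated by the other variables of row n; (b) for each n, the variables Y_{n,1}, ..., Y_{n,n} are identically distributed (not necessarily independent); and (c) sup_{n, i} E[ Y_{n,i}^4 ] < ∞. Then (1/n) Σ_{i=1}^n Y_{n,i} → 0 almost surely as n → ∞. -/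
open MeasureTheory Filter Topology Metric Set ProbabilityTheory

/-!
The proof is the fourth-moment method. Fix a row of length `n` with fourth moments at most `C`, and
let `S k` be the sum of its first `k` entries. An entry with zero conditional expectation given the
others is orthogonal to every function of the others (`integral_mul_eq_zero_of_condExp`). Expanding
`(S k + Y k) ^ 4`, the terms `S k ^ 3 * Y k` and `S k * Y k ^ 3` therefore have mean zero: in the
second one, each summand `Y i` of `S k` is centered given `Y k`. The same argument applied to
`(S i + Y i) ^ 2 * Y k ^ 2` gives `E[S k ^ 2 * Y k ^ 2] ≤ k * C`, because
`E[Y i ^ 2 * Y k ^ 2] ≤ C`. Induction on `k` yields `E[S k ^ 4] ≤ 3 * k ^ 2 * C`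
(`integral_sum_pow_four_le`).

The fourth moments of the row averages are thus at most `3 * C / n ^ 2`, which is summable, so
almost surely the fourth powers of the averages are summable and tend to zero
(`ae_tendsto_zero_of_integral_pow_four_le`).
-/

/-- A variable centered given `m` is orthogonal to every `m`-measurable one. -/
lemma integral_mul_eq_zero_of_condExp {Ω : Type} {m m0 : MeasurableSpace Ω} {P : Measure Ω}
    [IsProbabilityMeasure P] (hm : m ≤ m0) {X Z : Ω → ℝ} (hX : Integrable X P)
    (h0 : P[X | m] =ᵐ[P] 0) (hZ : Measurable[m] Z) (hZX : Integrable (fun ω => Z ω * X ω) P) :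
    ∫ ω, Z ω * X ω ∂P = 0 := by
  have h1 : P[Z * X | m] =ᵐ[P] Z * P[X | m] :=
    condExp_mul_of_stronglyMeasurable_left hZ.stronglyMeasurable hZX hX
  have h2 : ∫ ω, (P[Z * X | m]) ω ∂P = ∫ ω, (Z * X) ω ∂P := integral_condExp hm
  change ∫ ω, (Z * X) ω ∂P = 0
  rw [← h2]
  apply integral_eq_zero_of_ae
  filter_upwards [h1, h0] with ω h1 h0
  simp [h1, h0]

lemma integrable_mul_four {Ω : Type} [MeasurableSpace Ω] {P : Measure Ω} {a b c d : Ω → ℝ}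
    (ha : MemLp a 4 P) (hb : MemLp b 4 P) (hc : MemLp c 4 P) (hd : MemLp d 4 P) :
    Integrable (fun ω => a ω * b ω * c ω * d ω) P := by
  have key : ∀ {f : Ω → ℝ}, MemLp f 4 P → Integrable (fun ω => f ω ^ 4) P := by
    intro f hf
    have := hf.integrable_norm_pow (p := 4) (by norm_num)
    refine this.congr (ae_of_all _ fun ω => ?_)
    simp only [Real.norm_eq_abs]
    exact Even.pow_abs (by decide) _
  refine (((key ha).add (key hb)).add ((key hc).add (key hd))).mono'
    (((ha.1.mul hb.1).mul hc.1).mul hd.1) (ae_of_all _ fun ω => ?_)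
  simp only [Pi.add_apply, Real.norm_eq_abs]
  rw [abs_le]
  constructor <;>
  nlinarith [sq_nonneg (a ω * b ω - c ω * d ω), sq_nonneg (a ω * b ω + c ω * d ω),
    sq_nonneg (a ω ^ 2 - b ω ^ 2), sq_nonneg (c ω ^ 2 - d ω ^ 2),
    sq_nonneg (a ω ^ 2), sq_nonneg (b ω ^ 2), sq_nonneg (c ω ^ 2), sq_nonneg (d ω ^ 2)]

/-- The fourth moment of a partial sum of a row is at most quadratic in the number of terms. -/
lemma integral_sum_pow_four_le {Ω : Type} [MeasurableSpace Ω] {P : Measure Ω}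
    [IsProbabilityMeasure P] (n : ℕ) (Y : ℕ → Ω → ℝ)
    (hmeas : ∀ i, i < n → Measurable (Y i))
    (hcond : ∀ i < n,
      P[Y i | ⨆ j ∈ {j : ℕ | j < n ∧ j ≠ i}, MeasurableSpace.comap (Y j) inferInstance]
        =ᵐ[P] 0)
    (hL : ∀ i < n, MemLp (Y i) 4 P) (C : ℝ) (hmom : ∀ i < n, (∫ ω, (Y i ω) ^ 4 ∂P) ≤ C)
    (hC : 0 ≤ C) (k : ℕ) (hk : k ≤ n) :
    ∫ ω, (∑ i ∈ Finset.range k, Y i ω) ^ 4 ∂P ≤ 3 * (k : ℝ) ^ 2 * C := by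
  have hS : ∀ k ≤ n, MemLp (fun ω => ∑ i ∈ Finset.range k, Y i ω) 4 P := fun k hk =>
    memLp_finsetSum _ fun i hi => hL i (by have := Finset.mem_range.1 hi; omega)
  have hmle : ∀ i, (⨆ j ∈ {j : ℕ | j < n ∧ j ≠ i},
      MeasurableSpace.comap (Y j) inferInstance) ≤ ‹MeasurableSpace Ω› := fun i =>
    iSup₂_le fun j hj => (hmeas j hj.1).comap_le
  have hYm : ∀ i j, j < n → j ≠ i → Measurable[⨆ j ∈ {j : ℕ | j < n ∧ j ≠ i},
      MeasurableSpace.comap (Y j) inferInstance] (Y j) := fun i j hj hji =>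
    (comap_measurable (Y j)).mono
      (le_iSup₂ (f := fun j (_ : j ∈ {j : ℕ | j < n ∧ j ≠ i}) =>
        MeasurableSpace.comap (Y j) inferInstance) j ⟨hj, hji⟩) le_rfl
  have hSm : ∀ i ≤ n, Measurable[⨆ j ∈ {j : ℕ | j < n ∧ j ≠ i},
      MeasurableSpace.comap (Y j) inferInstance]
      (fun ω => ∑ l ∈ Finset.range i, Y l ω) := fun i hi =>
    Finset.measurable_fun_sum _ fun l hl => hYm i l
      (by have := Finset.mem_range.1 hl; omega) (by have := Finset.mem_range.1 hl; omega)
  have hYint : ∀ i < n, Integrable (Y i) P := fun i hi => (hL i hi).integrable (by norm_num)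
  have hsq : ∀ k < n, ∀ i ≤ k,
      ∫ ω, (∑ l ∈ Finset.range i, Y l ω) ^ 2 * Y k ω ^ 2 ∂P ≤ i * C := by
    intro k hk i
    induction i with
    | zero => intro _; simp
    | succ i ih =>
      intro hi
      have ih := ih (by omega)
      set S : Ω → ℝ := fun ω => ∑ l ∈ Finset.range i, Y l ω with hSdef
      have LS : MemLp S 4 P := hS i (by omega)
      have Li := hL i (by omega)
      have Lk := hL k hk
      have I1 := integrable_mul_four LS LS Lk Lk
      have I2 := integrable_mul_four LS Lk Lk Li
      have I3 := integrable_mul_four Li Li Lk Lk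
      have z : ∫ ω, S ω * Y k ω * Y k ω * Y i ω ∂P = 0 :=
        integral_mul_eq_zero_of_condExp (Z := fun ω => S ω * Y k ω * Y k ω) (hmle i)
          (hYint i (by omega)) (hcond i (by omega))
          (((hSm i (by omega)).mul (hYm i k hk (by omega))).mul (hYm i k hk (by omega))) I2
      have b : ∫ ω, Y i ω * Y i ω * Y k ω * Y k ω ∂P ≤ C := by
        have J1 := integrable_mul_four Li Li Li Li
        have J2 := integrable_mul_four Lk Lk Lk Lk
        have : ∫ ω, Y i ω * Y i ω * Y k ω * Y k ω ∂P ≤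
            ∫ ω, (1 / 2 * (Y i ω * Y i ω * Y i ω * Y i ω)
              + 1 / 2 * (Y k ω * Y k ω * Y k ω * Y k ω)) ∂P := by
          refine integral_mono I3 ((J1.const_mul _).add (J2.const_mul _)) fun ω => ?_
          simp only
          nlinarith [sq_nonneg (Y i ω ^ 2 - Y k ω ^ 2)]
        rw [integral_add (J1.const_mul _) (J2.const_mul _), integral_const_mul,
          integral_const_mul] at this
        have e : ∀ j, ∫ ω, Y j ω * Y j ω * Y j ω * Y j ω ∂P = ∫ ω, Y j ω ^ 4 ∂P := fun j =>
          integral_congr_ae (ae_of_all _ fun ω => by ring)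
        rw [e, e] at this
        linarith [hmom i (by omega), hmom k hk]
      have e1 : ∫ ω, S ω * S ω * Y k ω * Y k ω ∂P = ∫ ω, S ω ^ 2 * Y k ω ^ 2 ∂P :=
        integral_congr_ae (ae_of_all _ fun ω => by ring)
      have e : ∫ ω, (∑ l ∈ Finset.range (i + 1), Y l ω) ^ 2 * Y k ω ^ 2 ∂P =
          ∫ ω, (S ω * S ω * Y k ω * Y k ω + 2 * (S ω * Y k ω * Y k ω * Y i ω)
            + Y i ω * Y i ω * Y k ω * Y k ω) ∂P :=
        integral_congr_ae (ae_of_all _ fun ω => by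
          simp only [Finset.sum_range_succ, hSdef]; ring)
      rw [e, integral_add (I1.fun_add (I2.const_mul 2)) I3, integral_add I1 (I2.const_mul 2),
        integral_const_mul, z, e1]
      push_cast
      linarith
  have hcube : ∀ k < n, ∫ ω, (∑ l ∈ Finset.range k, Y l ω) * Y k ω * Y k ω * Y k ω ∂P = 0 := by
    intro k hk
    have Lk := hL k hk
    have Ii : ∀ i < n, Integrable (fun ω => Y k ω * Y k ω * Y k ω * Y i ω) P := fun i hi =>
      integrable_mul_four Lk Lk Lk (hL i hi)
    have e : ∫ ω, (∑ l ∈ Finset.range k, Y l ω) * Y k ω * Y k ω * Y k ω ∂P =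
        ∫ ω, ∑ l ∈ Finset.range k, Y k ω * Y k ω * Y k ω * Y l ω ∂P :=
      integral_congr_ae (ae_of_all _ fun ω => by
        simp only [← Finset.mul_sum]; ring)
    rw [e, integral_finsetSum _ fun l hl => Ii l (by have := Finset.mem_range.1 hl; omega)]
    refine Finset.sum_eq_zero fun l hl => ?_
    have hl := Finset.mem_range.1 hl
    have hm := hYm l k hk (by omega)
    exact integral_mul_eq_zero_of_condExp (Z := fun ω => Y k ω * Y k ω * Y k ω) (hmle l)
      (hYint l (by omega)) (hcond l (by omega)) ((hm.mul hm).mul hm) (Ii l (by omega))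
  induction k with
  | zero => simp
  | succ k ih =>
    have ih := ih (by omega)
    have hsq := hsq k (by omega) k le_rfl
    have hcube := hcube k (by omega)
    have hmk := hSm k (by omega)
    have LS := hS k (by omega)
    set S : Ω → ℝ := fun ω => ∑ l ∈ Finset.range k, Y l ω with hSdef
    have Lk := hL k (by omega)
    have I1 := integrable_mul_four LS LS LS LS
    have I2 := integrable_mul_four LS LS LS Lk
    have I3 := integrable_mul_four LS LS Lk Lk
    have I4 := integrable_mul_four LS Lk Lk Lk
    have I5 := integrable_mul_four Lk Lk Lk Lk
    have z : ∫ ω, S ω * S ω * S ω * Y k ω ∂P = 0 :=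
      integral_mul_eq_zero_of_condExp (Z := fun ω => S ω * S ω * S ω) (hmle k)
        (hYint k (by omega)) (hcond k (by omega)) ((hmk.mul hmk).mul hmk) I2
    have e1 : ∫ ω, S ω * S ω * S ω * S ω ∂P = ∫ ω, S ω ^ 4 ∂P :=
      integral_congr_ae (ae_of_all _ fun ω => by ring)
    have e3 : ∫ ω, S ω * S ω * Y k ω * Y k ω ∂P = ∫ ω, S ω ^ 2 * Y k ω ^ 2 ∂P :=
      integral_congr_ae (ae_of_all _ fun ω => by ring)
    have e5 : ∫ ω, Y k ω * Y k ω * Y k ω * Y k ω ∂P = ∫ ω, Y k ω ^ 4 ∂P :=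
      integral_congr_ae (ae_of_all _ fun ω => by ring)
    have e : ∫ ω, (∑ l ∈ Finset.range (k + 1), Y l ω) ^ 4 ∂P =
        ∫ ω, (S ω * S ω * S ω * S ω + 4 * (S ω * S ω * S ω * Y k ω)
          + 6 * (S ω * S ω * Y k ω * Y k ω) + 4 * (S ω * Y k ω * Y k ω * Y k ω)
          + Y k ω * Y k ω * Y k ω * Y k ω) ∂P :=
      integral_congr_ae (ae_of_all _ fun ω => by
        simp only [Finset.sum_range_succ, hSdef]; ring)
    have A2 := I1.fun_add (I2.const_mul 4)
    have A3 := A2.fun_add (I3.const_mul 6)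
    have A4 := A3.fun_add (I4.const_mul 4)
    rw [e, integral_add A4 I5, integral_add A3 (I4.const_mul 4),
      integral_add A2 (I3.const_mul 6), integral_add I1 (I2.const_mul 4), integral_const_mul,
      integral_const_mul, integral_const_mul, z, e1, e3, e5, hcube]
    push_cast
    have := hmom k (by omega)
    change ∫ ω, S ω ^ 4 ∂P ≤ _ at ih
    change ∫ ω, S ω ^ 2 * Y k ω ^ 2 ∂P ≤ _ at hsq
    nlinarith

/-- Summable fourth moments force almost sure convergence to zero. -/
lemma ae_tendsto_zero_of_integral_pow_four_le {Ω : Type} [MeasurableSpace Ω] {P : Measure Ω}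
    (X : ℕ → Ω → ℝ) (hX : ∀ n, Integrable (fun ω => X n ω ^ 4) P) (c : ℕ → ℝ) (hc : Summable c)
    (hle : ∀ n, ∫ ω, X n ω ^ 4 ∂P ≤ c n) :
    ∀ᵐ ω ∂P, Tendsto (fun n => X n ω) atTop (𝓝 0) := by
  have h4 : ∀ n ω, 0 ≤ X n ω ^ 4 := fun n ω => by positivity
  have hm : ∀ n, AEMeasurable (fun ω => ENNReal.ofReal (X n ω ^ 4)) P :=
    fun n => (hX n).1.aemeasurable.ennreal_ofReal
  have hfin : ∫⁻ ω, ∑' n, ENNReal.ofReal (X n ω ^ 4) ∂P ≠ ⊤ := by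
    rw [lintegral_tsum hm]
    refine ne_top_of_le_ne_top hc.tsum_ofReal_ne_top (ENNReal.tsum_le_tsum fun n => ?_)
    rw [← ofReal_integral_eq_lintegral_ofReal (hX n) (ae_of_all _ (h4 n))]
    exact ENNReal.ofReal_le_ofReal (hle n)
  filter_upwards [ae_lt_top' (AEMeasurable.tsum hm) hfin] with ω hω
  have h1 := ENNReal.tendsto_atTop_zero_of_tsum_ne_top hω.ne
  have h2 : Tendsto (fun n => X n ω ^ 4) atTop (𝓝 0) := by
    have := (ENNReal.tendsto_toReal ENNReal.zero_ne_top).comp h1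
    simpa [Function.comp_def, ENNReal.toReal_ofReal (h4 _ ω)] using this
  -- `|x| = √√(x ^ 4)`
  have h3 : Tendsto (fun n => √(√(X n ω ^ 4))) atTop (𝓝 0) := by
    simpa using h2.sqrt.sqrt
  rw [tendsto_zero_iff_abs_tendsto_zero]
  refine h3.congr fun n => ?_
  rw [show X n ω ^ 4 = (X n ω ^ 2) ^ 2 by ring, Real.sqrt_sq (sq_nonneg _), Real.sqrt_sq_eq_abs]
  rfl

open MeasureTheory Filter Topology Metric Set ProbabilityTheory

/-- (Theorem 8 of the paper: generalized strong law of large numbers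
for triangular arrays with conditionally centered rows.)  If within each row the
variables are identically distributed, each variable has zero conditional expectation
given the σ-algebra generated by the other variables of its row, and the fourth
moments are uniformly bounded, then the row averages converge to `0` almost surely. -/
theorem stmt_15 (Ω : Type) [MeasurableSpace Ω] (P : Measure Ω) [IsProbabilityMeasure P]
    (Y : ℕ → ℕ → Ω → ℝ)
    (hmeas : ∀ n i, i < n → Measurable (Y n i))
    (hcond : ∀ n, ∀ i < n,
      P[Y n i | ⨆ j ∈ {j : ℕ | j < n ∧ j ≠ i}, MeasurableSpace.comap (Y n j) inferInstance]
        =ᵐ[P] 0)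
    (hid : ∀ n, ∀ i < n, ∀ j < n, P.map (Y n i) = P.map (Y n j))
    (hint : ∀ n, ∀ i < n, Integrable (fun ω => (Y n i ω) ^ 4) P)
    (hmom : ∃ C : ℝ, ∀ n, ∀ i < n, (∫ ω, (Y n i ω) ^ 4 ∂P) ≤ C) :
    ∀ᵐ ω ∂P, Tendsto (fun n : ℕ => (n : ℝ)⁻¹ * ∑ i ∈ Finset.range n, Y n i ω) atTop (𝓝 0) := by
  obtain ⟨C, hC⟩ := hmom
  have hC0 : 0 ≤ C :=
    le_trans (integral_nonneg fun ω => by positivity) (hC 1 0 one_pos)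
  have hL : ∀ n, ∀ i < n, MemLp (Y n i) 4 P := by
    intro n i hi
    rw [← integrable_norm_rpow_iff (hmeas n i hi).aestronglyMeasurable (by norm_num) (by norm_num)]
    refine (hint n i hi).congr (ae_of_all _ fun ω => ?_)
    have e : (4 : ENNReal).toReal = ((4 : ℕ) : ℝ) := by norm_num
    simp only [Real.norm_eq_abs, e, Real.rpow_natCast]
    exact (Even.pow_abs (by decide) _).symm
  have hS : ∀ n, Integrable (fun ω => (∑ i ∈ Finset.range n, Y n i ω) ^ 4) P := by
    intro n
    have h : MemLp (fun ω => ∑ i ∈ Finset.range n, Y n i ω) 4 P :=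
      memLp_finsetSum _ fun i hi => hL n i (Finset.mem_range.1 hi)
    exact (integrable_mul_four h h h h).congr (ae_of_all _ fun ω => by ring)
  refine ae_tendsto_zero_of_integral_pow_four_le _ (fun n => ?_)
    (fun n => 3 * C * ((n : ℝ) ^ 2)⁻¹)
    ((Real.summable_nat_pow_inv.2 one_lt_two).mul_left _) fun n => ?_
  · simp only [mul_pow]
    exact (hS n).const_mul _
  · simp only [mul_pow]
    rw [integral_const_mul]
    have h := integral_sum_pow_four_le n (Y n) (hmeas n) (hcond n) (hL n) C (hC n) hC0 n le_rfl
    refine (mul_le_mul_of_nonneg_left h (by positivity)).trans_eq ?_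
    rcases Nat.eq_zero_or_pos n with rfl | hn
    · simp
    · field_simp
end

section
/- Let X ⊂ R^{d_x} be compact and π a Borel probability measure on X × {0,1} whose X-marginal is absolutely continuous with respect to Lebesgue measure and for which p_π(x) = P_π(Y = 1 | X = x) admits an upper semi-continuous version. Let ℓ : [0,1] × [0,1] → R satisfy: (i) ℓ is continuous, nonnegative, ℓ(y,y') = 0 iff y = y'; (ii) for every q ∈ [0,1] the map y ↦ q ℓ(y,1) + (1−q) ℓ(y,0) has a unique minimizer y*_q ∈ [0,1] and q ↦ y*_q is increasing. Define ψ*_π : X → [0,1] by ψ*_π(x) = y*_{p_π(x)}. Then ψ*_π is measurable and inf over continuous f : X → [0,1] of E_π[ ℓ(f(X), Y) ] equals E_π[ ℓ(ψ*_π(X), Y) ]. -/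
/-!
Let `μ` be the first marginal of `π`. Since `π` lives on `X × {0, 1}` and `p` is a version of the
conditional probability of `Y = 1`, the risk of any measurable `g : X → [0, 1]` is the
`μ`-integral of its conditional risk, `∫ p ℓ(g, 1) + (1 - p) ℓ(g, 0) ∂μ` (`risk_eq`).

* No predictor beats `ystar ∘ p`, because `ystar (p x)` minimizes the integrand at each `x ∈ X`.
* Conversely `ystar ∘ p` is measurable (a monotone function of an upper semicontinuous one), so by
  density of the continuous functions in `L¹(μ)` it is a `μ`-a.e. limit of continuous functions with
  values in `[0, 1]` (`exists_continuous_seq_ae`). The loss being continuous, hence bounded, on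
  `[0, 1]²`, the risks converge by dominated convergence.
-/

open MeasureTheory Filter Topology Metric Set
open scoped ENNReal

/-- A measurable function with values in `[0, 1]` is the a.e. limit of continuous functions with
values in `[0, 1]`: take an a.e. convergent subsequence of an `L¹`-approximation and truncate. -/
lemma exists_continuous_seq_ae {E : Type*} [TopologicalSpace E] [NormalSpace E]
    [MeasurableSpace E] [BorelSpace E] (μ : Measure E) [IsFiniteMeasure μ] [μ.WeaklyRegular]
    {g : E → ℝ} (hg : AEMeasurable g μ) (hg01 : ∀ᵐ x ∂μ, g x ∈ Icc (0 : ℝ) 1) :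
    ∃ f : ℕ → E → ℝ, (∀ n, Continuous (f n)) ∧ (∀ n x, f n x ∈ Icc (0 : ℝ) 1) ∧
      ∀ᵐ x ∂μ, Tendsto (fun n => f n x) atTop (𝓝 (g x)) := by
  have hgLp : MemLp g 1 μ := by
    refine MemLp.of_bound hg.aestronglyMeasurable 1 ?_
    filter_upwards [hg01] with x hx
    rw [Real.norm_eq_abs, abs_le]
    constructor <;> linarith [hx.1, hx.2]
  have hε : ∀ n : ℕ, ((n : ℝ≥0∞) + 1)⁻¹ ≠ 0 := fun n =>
    ENNReal.inv_ne_zero.2 (by finiteness)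
  choose h hh _ using fun n : ℕ => hgLp.exists_boundedContinuous_eLpNorm_sub_le
    ENNReal.one_ne_top (hε n)
  have hlim : Tendsto (fun n => eLpNorm ((h n : E → ℝ) - g) 1 μ) atTop (𝓝 0) := by
    refine tendsto_of_tendsto_of_tendsto_of_le_of_le tendsto_const_nhds
      (h := fun n : ℕ => ((n : ℝ≥0∞) + 1)⁻¹) ?_ (fun _ => zero_le) fun n => ?_
    · have := (tendsto_add_atTop_iff_nat 1).2 ENNReal.tendsto_inv_nat_nhds_zero
      simpa using this
    · rw [eLpNorm_sub_comm]
      exact hh n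
  obtain ⟨ns, -, hns⟩ := (tendstoInMeasure_of_tendsto_eLpNorm one_ne_zero
    (fun n => (h n).continuous.aestronglyMeasurable) hg.aestronglyMeasurable
    hlim).exists_seq_tendsto_ae
  refine ⟨fun n x => projIcc (0 : ℝ) 1 zero_le_one (h (ns n) x), fun n => ?_, fun n x => ?_, ?_⟩
  · exact continuous_subtype_val.comp (continuous_projIcc.comp (h (ns n)).continuous)
  · exact (projIcc (0 : ℝ) 1 zero_le_one (h (ns n) x)).2
  · filter_upwards [hns, hg01] with x hx hx01
    have := ((continuous_subtype_val.comp (continuous_projIcc (a := (0 : ℝ)) (b := 1)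
      (h := zero_le_one))).tendsto (g x)).comp hx
    simpa [Function.comp_def, projIcc_of_mem zero_le_one hx01] using this

/-- Disintegration along the second coordinate being `1` or not, when `p` is a version of the
conditional probability of that event given the first coordinate. -/
lemma integral_ite_eq {E : Type*} [MeasurableSpace E] (π : Measure (E × ℝ)) [IsFiniteMeasure π]
    {p : E → ℝ} (hp : AEMeasurable p (π.map Prod.fst)) (hp01 : ∀ x, p x ∈ Icc (0 : ℝ) 1)
    (hp_cond : ∀ s : Set E, MeasurableSet s →
      π (s ×ˢ {(1:ℝ)}) = ∫⁻ x in s, ENNReal.ofReal (p x) ∂(π.map Prod.fst))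
    {a b : E → ℝ} (ha : AEMeasurable a (π.map Prod.fst)) (hb : AEMeasurable b (π.map Prod.fst))
    {C : ℝ} (haC : ∀ x, |a x| ≤ C) (hbC : ∀ x, |b x| ≤ C) :
    ∫ z, (if z.2 = 1 then a z.1 else b z.1) ∂π
      = ∫ x, (p x * a x + (1 - p x) * b x) ∂(π.map Prod.fst) := by
  set μ := π.map Prod.fst with hμ
  set S : Set (E × ℝ) := Prod.snd ⁻¹' {1} with hS
  have hSm : MeasurableSet S := measurable_snd (measurableSet_singleton 1)
  have hden : (π.restrict S).map Prod.fst = μ.withDensity (fun x => ENNReal.ofReal (p x)) := by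
    ext s hs
    rw [Measure.map_apply measurable_fst hs, withDensity_apply _ hs, ← hp_cond s hs,
      Measure.restrict_apply (measurable_fst hs)]
    congr 1
  have hac : (π.restrict S).map Prod.fst ≪ μ := hden ▸ withDensity_absolutelyContinuous _ _
  have ha' : AEMeasurable (fun z : E × ℝ => a z.1) π := ha.comp_measurable measurable_fst
  have hb' : AEMeasurable (fun z : E × ℝ => b z.1) π := hb.comp_measurable measurable_fst
  have key : ∀ c : E → ℝ, AEMeasurable c μ → ∫ z in S, c z.1 ∂π = ∫ x, p x * c x ∂μ := by
    intro c hc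
    rw [← integral_map measurable_fst.aemeasurable (hc.mono_ac hac).aestronglyMeasurable, hden,
      integral_withDensity_eq_integral_toReal_smul₀ hp.ennreal_ofReal (by simp)]
    refine integral_congr_ae (ae_of_all _ fun x => ?_)
    simp [ENNReal.toReal_ofReal (hp01 x).1]
  have hbint : Integrable (fun z : E × ℝ => b z.1) π :=
    Integrable.of_bound hb'.aestronglyMeasurable C (ae_of_all _ fun z => hbC z.1)
  have haint : Integrable (fun z : E × ℝ => a z.1) π :=
    Integrable.of_bound ha'.aestronglyMeasurable C (ae_of_all _ fun z => haC z.1)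
  have hFint : Integrable (fun z : E × ℝ => if z.2 = 1 then a z.1 else b z.1) π := by
    classical
    refine (Integrable.piecewise hSm haint.integrableOn hbint.integrableOn).congr
      (ae_of_all _ fun z => ?_)
    simp [Set.piecewise, hS]
  have h1 : ∫ z in S, (if z.2 = 1 then a z.1 else b z.1) ∂π = ∫ z in S, a z.1 ∂π :=
    setIntegral_congr_fun hSm fun z hz => if_pos hz
  have h2 : ∫ z in Sᶜ, (if z.2 = 1 then a z.1 else b z.1) ∂π = ∫ z in Sᶜ, b z.1 ∂π :=
    setIntegral_congr_fun hSm.compl fun z hz => if_neg hz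
  have h3 := integral_add_compl hSm hbint
  have h4 : ∫ z, b z.1 ∂π = ∫ x, b x ∂μ :=
    (integral_map measurable_fst.aemeasurable hb.aestronglyMeasurable).symm
  have hbd : ∀ c : E → ℝ, AEMeasurable c μ → (∀ x, |c x| ≤ C) →
      Integrable c μ ∧ Integrable (fun x => p x * c x) μ := by
    intro c hc hcC
    refine ⟨Integrable.of_bound hc.aestronglyMeasurable C (ae_of_all _ hcC),
      Integrable.of_bound (hp.mul hc).aestronglyMeasurable C (ae_of_all _ fun x => ?_)⟩
    rw [Real.norm_eq_abs, abs_mul, abs_of_nonneg (hp01 x).1]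
    nlinarith [(hp01 x).1, (hp01 x).2, abs_nonneg (c x), hcC x]
  have h5 : ∫ x, (p x * a x + (1 - p x) * b x) ∂μ
      = ∫ x, p x * a x ∂μ + (∫ x, b x ∂μ - ∫ x, p x * b x ∂μ) := by
    rw [← integral_sub (hbd b hb hbC).1 (hbd b hb hbC).2,
      ← integral_add (hbd a ha haC).2
        (show Integrable (fun x => b x - p x * b x) μ from
          (hbd b hb hbC).1.sub (hbd b hb hbC).2)]
    refine integral_congr_ae (ae_of_all _ fun x => ?_)
    simp only
    ring
  rw [← integral_add_compl hSm hFint, h1, h2, h5, key a ha, ← key b hb, ← h4, ← h3]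
  ring

/-- The risk of a predictor is the integral of its conditional risk. For `c = 0, 1`,
`L c` is a continuous bounded extension of `ℓ · c` from `[0, 1]` to the whole line. -/
lemma risk_eq {E : Type*} [MeasurableSpace E] {X : Set E}
    (π : Measure (E × ℝ)) [IsFiniteMeasure π]
    (hsupp : π ((X ×ˢ ({0, 1} : Set ℝ))ᶜ) = 0)
    {p : E → ℝ} (hp : AEMeasurable p (π.map Prod.fst)) (hp01 : ∀ x, p x ∈ Icc (0 : ℝ) 1)
    (hp_cond : ∀ s : Set E, MeasurableSet s →
      π (s ×ˢ {(1:ℝ)}) = ∫⁻ x in s, ENNReal.ofReal (p x) ∂(π.map Prod.fst))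
    {ℓ : ℝ → ℝ → ℝ} {L : ℝ → ℝ → ℝ} (hL : ∀ c ∈ ({0, 1} : Set ℝ), Continuous (L c))
    (hLℓ : ∀ c, ∀ y ∈ Icc (0 : ℝ) 1, L c y = ℓ y c)
    {C : ℝ} (hC : ∀ c ∈ ({0, 1} : Set ℝ), ∀ y, |L c y| ≤ C)
    {g : E → ℝ} (hg : AEMeasurable g (π.map Prod.fst)) (hg01 : ∀ x ∈ X, g x ∈ Icc (0 : ℝ) 1) :
    ∫ z, ℓ (g z.1) z.2 ∂π
      = ∫ x, (p x * L 1 (g x) + (1 - p x) * L 0 (g x)) ∂(π.map Prod.fst) := by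
  rw [← integral_ite_eq π hp hp01 hp_cond (a := fun x => L 1 (g x)) (b := fun x => L 0 (g x))
    ((hL 1 (by simp)).measurable.comp_aemeasurable hg)
    ((hL 0 (by simp)).measurable.comp_aemeasurable hg)
    (fun x => hC 1 (by simp) _) (fun x => hC 0 (by simp) _)]
  refine integral_congr_ae ?_
  have hae : ∀ᵐ z ∂π, z ∈ X ×ˢ ({0, 1} : Set ℝ) := mem_ae_iff.2 hsupp
  filter_upwards [hae] with z hz
  rcases hz.2 with h | h
  · simp [h, hLℓ 0 _ (hg01 _ hz.1)]
  · rw [mem_singleton_iff] at h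
    simp [h, hLℓ 1 _ (hg01 _ hz.1)]

/-- (Lemma: the plug-in Bayes predictor `ψ*_π(x) = y*_{p_π(x)}` is
measurable and achieves the infimum of the risk over continuous functions
`X → [0,1]`.) -/
theorem stmt_18 {dx : ℕ}
    (X : Set (EuclideanSpace ℝ (Fin dx))) (hX : IsCompact X) (hXne : X.Nonempty)
    (π : Measure (EuclideanSpace ℝ (Fin dx) × ℝ)) [IsProbabilityMeasure π]
    (hsupp : π ((X ×ˢ ({0, 1} : Set ℝ))ᶜ) = 0)
    (habs : π.map Prod.fst ≪ volume)
    (p : EuclideanSpace ℝ (Fin dx) → ℝ)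
    (hp_usc : UpperSemicontinuousOn p X)
    (hp_range : ∀ x, p x ∈ Set.Icc (0:ℝ) 1)
    (hp_cond : ∀ s : Set (EuclideanSpace ℝ (Fin dx)), MeasurableSet s →
      π (s ×ˢ {(1:ℝ)}) = ∫⁻ x in s, ENNReal.ofReal (p x) ∂(π.map Prod.fst))
    (ℓ : ℝ → ℝ → ℝ)
    (hℓcont : ContinuousOn (fun yy : ℝ × ℝ => ℓ yy.1 yy.2) (Set.Icc 0 1 ×ˢ Set.Icc 0 1))
    (hℓnonneg : ∀ y ∈ Set.Icc (0:ℝ) 1, ∀ y' ∈ Set.Icc (0:ℝ) 1, 0 ≤ ℓ y y')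
    (hℓzero : ∀ y ∈ Set.Icc (0:ℝ) 1, ∀ y' ∈ Set.Icc (0:ℝ) 1, (ℓ y y' = 0 ↔ y = y'))
    (ystar : ℝ → ℝ)
    (hystar_mem : ∀ q ∈ Set.Icc (0:ℝ) 1, ystar q ∈ Set.Icc (0:ℝ) 1)
    (hystar_min : ∀ q ∈ Set.Icc (0:ℝ) 1, ∀ y ∈ Set.Icc (0:ℝ) 1,
      q * ℓ (ystar q) 1 + (1 - q) * ℓ (ystar q) 0 ≤ q * ℓ y 1 + (1 - q) * ℓ y 0)
    (hystar_uniq : ∀ q ∈ Set.Icc (0:ℝ) 1, ∀ y ∈ Set.Icc (0:ℝ) 1,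
      q * ℓ y 1 + (1 - q) * ℓ y 0 ≤ q * ℓ (ystar q) 1 + (1 - q) * ℓ (ystar q) 0 →
      y = ystar q)
    (hystar_mono : MonotoneOn ystar (Set.Icc 0 1)) :
    Measurable (fun x : X => ystar (p ↑x)) ∧
    sInf {t : ℝ | ∃ f : EuclideanSpace ℝ (Fin dx) → ℝ,
        ContinuousOn f X ∧ Set.MapsTo f X (Set.Icc 0 1) ∧ t = ∫ z, ℓ (f z.1) z.2 ∂π} =
      ∫ z, ℓ (ystar (p z.1)) z.2 ∂π := by
  have hXm : MeasurableSet X := hX.measurableSet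
  set μ := π.map Prod.fst with hμ
  have : IsProbabilityMeasure μ := Measure.isProbabilityMeasure_map measurable_fst.aemeasurable
  have hμX : ∀ᵐ x ∂μ, x ∈ X := by
    refine (ae_map_iff (p := (· ∈ X)) measurable_fst.aemeasurable hXm).2 ?_
    have hae : ∀ᵐ z ∂π, z ∈ X ×ˢ ({0, 1} : Set ℝ) := mem_ae_iff.2 hsupp
    filter_upwards [hae] with z hz using hz.1
  have hres : μ.restrict X = μ := Measure.restrict_eq_self_of_ae_mem hμX
  have hpX : Measurable (fun x : X => p x) :=
    (upperSemicontinuousOn_iff_restrict.2 hp_usc).measurable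
  have hmono : Monotone fun q : ℝ => ystar (projIcc (0 : ℝ) 1 zero_le_one q) := fun q r hqr =>
    hystar_mono (projIcc (0 : ℝ) 1 zero_le_one q).2 (projIcc (0 : ℝ) 1 zero_le_one r).2 (monotone_projIcc _ hqr)
  have hψX : Measurable (fun x : X => ystar (p x)) := by
    convert hmono.measurable.comp hpX using 2 with x
    simp [projIcc_of_mem zero_le_one (hp_range x)]
  have hpm : AEMeasurable p μ := hres ▸ aemeasurable_restrict_of_measurable_subtype hXm hpX
  have hψm : AEMeasurable (fun x => ystar (p x)) μ :=
    hres ▸ aemeasurable_restrict_of_measurable_subtype hXm hψX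
  refine ⟨hψX, ?_⟩
  -- Truncating the first argument to `[0, 1]` makes `ℓ · 0` and `ℓ · 1` globally continuous.
  let L : ℝ → ℝ → ℝ := fun c y => ℓ (projIcc (0 : ℝ) 1 zero_le_one y) c
  have h01 : ∀ c ∈ ({0, 1} : Set ℝ), c ∈ Icc (0 : ℝ) 1 := by
    rintro c (rfl | rfl) <;> simp
  have hL : ∀ c ∈ ({0, 1} : Set ℝ), Continuous (L c) := fun c hc =>
    hℓcont.comp_continuous (f := fun y : ℝ => ((projIcc (0 : ℝ) 1 zero_le_one y : ℝ), c))
      ((continuous_subtype_val.comp continuous_projIcc).prodMk continuous_const)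
      (fun y => ⟨(projIcc (0 : ℝ) 1 zero_le_one y).2, h01 c hc⟩)
  have hLℓ : ∀ c, ∀ y ∈ Icc (0 : ℝ) 1, L c y = ℓ y c := fun c y hy => by
    simp only [L, projIcc_of_mem zero_le_one hy]
  obtain ⟨C, hCℓ⟩ := (isCompact_Icc.prod isCompact_Icc).exists_bound_of_continuousOn hℓcont
  have hC : ∀ c ∈ ({0, 1} : Set ℝ), ∀ y, |L c y| ≤ C := fun c hc y =>
    hCℓ (_, c) ⟨(projIcc (0 : ℝ) 1 zero_le_one y).2, h01 c hc⟩
  have hrisk : ∀ g : EuclideanSpace ℝ (Fin dx) → ℝ, AEMeasurable g μ →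
      (∀ x ∈ X, g x ∈ Icc (0 : ℝ) 1) → ∫ z, ℓ (g z.1) z.2 ∂π
        = ∫ x, (p x * L 1 (g x) + (1 - p x) * L 0 (g x)) ∂μ := fun g hg hg01 =>
    risk_eq π hsupp hpm hp_range hp_cond hL hLℓ hC hg hg01
  have hmeas : ∀ g : EuclideanSpace ℝ (Fin dx) → ℝ, AEMeasurable g μ →
      AEStronglyMeasurable (fun x => p x * L 1 (g x) + (1 - p x) * L 0 (g x)) μ := fun g hg =>
    ((hpm.mul ((hL 1 (by simp)).measurable.comp_aemeasurable hg)).add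
      ((hpm.const_sub 1).mul ((hL 0 (by simp)).measurable.comp_aemeasurable hg))).aestronglyMeasurable
  have hbound : ∀ x y : ℝ, x ∈ Icc (0 : ℝ) 1 → ‖x * L 1 y + (1 - x) * L 0 y‖ ≤ C := by
    intro x y hx
    have h1 := abs_le.1 (hC 1 (by simp) y)
    have h0 := abs_le.1 (hC 0 (by simp) y)
    rw [Real.norm_eq_abs, abs_le]
    constructor <;> nlinarith [hx.1, hx.2, h1.1, h1.2, h0.1, h0.2]
  have hint : ∀ g : EuclideanSpace ℝ (Fin dx) → ℝ, AEMeasurable g μ →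
      Integrable (fun x => p x * L 1 (g x) + (1 - p x) * L 0 (g x)) μ := fun g hg =>
    Integrable.of_bound (hmeas g hg) C (ae_of_all _ fun x => hbound _ _ (hp_range x))
  have hψ01 : ∀ x, ystar (p x) ∈ Icc (0 : ℝ) 1 := fun x => hystar_mem _ (hp_range x)
  have hlow : ∀ t ∈ {t : ℝ | ∃ f : EuclideanSpace ℝ (Fin dx) → ℝ,
        ContinuousOn f X ∧ Set.MapsTo f X (Set.Icc 0 1) ∧ t = ∫ z, ℓ (f z.1) z.2 ∂π},
      ∫ z, ℓ (ystar (p z.1)) z.2 ∂π ≤ t := by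
    rintro t ⟨f, hf, hf01, rfl⟩
    have hfm : AEMeasurable f μ := hres ▸ hf.aemeasurable hXm
    rw [hrisk f hfm hf01, hrisk _ hψm fun x _ => hψ01 x]
    refine integral_mono_ae (hint _ hψm) (hint f hfm) ?_
    filter_upwards [hμX] with x hx
    simp only [hLℓ _ _ (hψ01 x), hLℓ _ _ (hf01 hx)]
    exact hystar_min _ (hp_range x) _ (hf01 hx)
  obtain ⟨f, hfc, hf01, hflim⟩ := exists_continuous_seq_ae μ hψm (ae_of_all _ hψ01)
  refine le_antisymm ?_ (le_csInf
    ⟨_, f 0, (hfc 0).continuousOn, fun x _ => hf01 0 x, rfl⟩ hlow)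
  have hlim : Tendsto (fun n => ∫ z, ℓ (f n z.1) z.2 ∂π) atTop
      (𝓝 (∫ z, ℓ (ystar (p z.1)) z.2 ∂π)) := by
    rw [hrisk _ hψm fun x _ => hψ01 x]
    simp_rw [fun n => hrisk (f n) (hfc n).measurable.aemeasurable fun x _ => hf01 n x]
    refine tendsto_integral_of_dominated_convergence (fun _ => C)
      (fun n => hmeas _ (hfc n).measurable.aemeasurable) (integrable_const C)
      (fun n => ae_of_all _ fun x => hbound _ _ (hp_range x)) ?_
    filter_upwards [hflim] with x hx
    exact ((((hL 1 (by simp)).tendsto _).comp hx).const_mul _).add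
      ((((hL 0 (by simp)).tendsto _).comp hx).const_mul _)
  exact ge_of_tendsto' hlim fun n => csInf_le ⟨_, hlow⟩
    ⟨f n, (hfc n).continuousOn, fun x _ => hf01 n x, rfl⟩
end
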